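/- arXiv:2202.10626 — 2 statements merged into one kernel-verified Lean document; each statement's English description precedes it below -/
import Mathlib

section
/- Let G be a group, p a prime, x, y ∈ G, and r a positive integer. Then (xy)^{p^r} ≡ x^{p^r} y^{p^r} [y,x]^{C(p^r,2)} [y,x,x]^{C(p^r,3)} ⋯ [y, x, …, x] (with p^r − 1 copies of x in the last commutator) modulo the normal subgroup K(x,y) of ⟨x,y⟩ generated by all basic commutators in {x, y} of weight at least p^r and of weight at least 2 in y, together with the p^{r−k+1}-th powers of all basic commutators in {x, y} of weight less than p^k and weight at least 2 in y, for 1 ≤ k ≤ r. -/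
/-- The paper's commutator convention: `[x, y] = x⁻¹ * y⁻¹ * x * y`. -/
def cm {G : Type*} [Group G] (x y : G) : G := x⁻¹ * y⁻¹ * x * y

/-- Formal commutator words on a two-letter alphabet `{x, y}`. -/
inductive CommWord : Type
  | x : CommWord
  | y : CommWord
  | comm : CommWord → CommWord → CommWord

namespace CommWord

/-- Total weight. -/
def wt : CommWord → ℕ
  | x => 1
  | y => 1
  | comm a b => wt a + wt b

/-- Weight in the letter `x`. -/
def wtx : CommWord → ℕ
  | x => 1
  | y => 0
  | comm a b => wtx a + wtx b

/-- Weight in the letter `y`. -/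
def wty : CommWord → ℕ
  | x => 0
  | y => 1
  | comm a b => wty a + wty b

/-- An injective encoding, used to fix a linear order on commutator words. -/
def enc : CommWord → ℕ
  | x => 0
  | y => 1
  | comm a b => Nat.pair (enc a) (enc b) + 2

/-- The fixed linear order on commutator words used to define basic commutators:
first by weight, then by the encoding.  (Weight-one words satisfy `x < y`.) -/
def lt (a b : CommWord) : Prop := wt a < wt b ∨ (wt a = wt b ∧ enc a < enc b)

/-- Hall basic commutators on `{x, y}` with respect to the above order: the letters `x, y` are
basic, and `[u, v]` is basic iff `u, v` are basic, `v < u`, and if `u = [u₁, u₂]` then `u₂ ≤ v`. -/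
inductive IsBasic : CommWord → Prop
  | x : IsBasic x
  | y : IsBasic y
  | comm {u v : CommWord} : IsBasic u → IsBasic v → lt v u →
      (∀ u₁ u₂, u = comm u₁ u₂ → ¬ lt v u₂) → IsBasic (comm u v)

/-- Evaluation of a formal commutator word at elements `a, b` of a group,
with `[g, h] = g⁻¹h⁻¹gh`. -/
def eval {H : Type*} [Group H] (a b : H) : CommWord → H
  | x => a
  | y => b
  | comm u v => cm (eval a b u) (eval a b v)

end CommWord

/-- The iterated left-normed commutator `[b, a, a, …, a]` with `k` copies of `a`. -/
def itcomm {H : Type*} [Group H] (b a : H) : ℕ → H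
  | 0 => b
  | k + 1 => cm (itcomm b a k) a

section Collection

variable {G : Type*} [Group G] (p r : ℕ) (x y : G)

/-- The subgroup `⟨x, y⟩`. -/
def genSub : Subgroup G := Subgroup.closure {x, y}

/-- `x` as an element of `⟨x, y⟩`. -/
def X : genSub x y := ⟨x, Subgroup.subset_closure (by simp)⟩

/-- `y` as an element of `⟨x, y⟩`. -/
def Y : genSub x y := ⟨y, Subgroup.subset_closure (by simp)⟩

/-- The generating set of Hall's subgroup `K(x, y)` inside `⟨x, y⟩`: basic commutators in
`{x, y}` of weight at least `p^r` and weight at least `2` in `y`, together with the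
`p^(r-k+1)`-st powers of basic commutators of weight `< p^k` and weight at least `2` in `y`,
for `1 ≤ k ≤ r`. -/
def Kgens : Set (genSub x y) :=
  {g | ∃ c : CommWord, c.IsBasic ∧ 2 ≤ c.wty ∧
    ((p ^ r ≤ c.wt ∧ g = c.eval (X x y) (Y x y)) ∨
     (∃ k, 1 ≤ k ∧ k ≤ r ∧ c.wt < p ^ k ∧ g = (c.eval (X x y) (Y x y)) ^ p ^ (r - k + 1)))}

/-- Hall's subgroup `K(x, y)`, a normal subgroup of `⟨x, y⟩`. -/
def K : Subgroup (genSub x y) := Subgroup.normalClosure (Kgens p r x y)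

/-!
Give `x` the degree `(1, 0)` and `y` the degree `(1, 1)`. In the smallest filtration of `⟨x, y⟩`
compatible with commutators, the second component of the degree counts occurrences of `y`, and the
sequence `n ↦ (xy)ⁿ` and the collected product
`n ↦ xⁿ yⁿ [y, x]^C(n, 2) [y, x, x]^C(n, 3) ⋯` satisfy the same first order difference equation up
to terms of weight at least `2` in `y`. Their ratio is therefore a polynomial sequence, in the sense
of Leibman, with values of weight at least `2` in `y`. Since it is trivial at `0` and `1`, its
Taylor expansion at `n = p ^ r` is a product of powers `d ^ C(p ^ r, j)` with `2 ≤ j`, where `d` has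
degree `(j, 2)`.

Eliminating the basic commutators one at a time (Lazard elimination) shows that the elements of
degree `(j, 2)` lie in the normal closure of the basic commutators of weight at least `j` and weight
at least `2` in `y`. If `p ^ v` is the exact power of `p` in `j`, then `p ^ (r - v)` divides
`C(p ^ r, j)`, and the powers of basic commutators that generate `K(x, y)` are just sufficient for
`d ^ p ^ (r - v) ∈ K(x, y)`; the passage from the generators to their products is the Hall–Petrescu
argument, by descending induction on the weight.
-/

section CommutatorIdentities

variable {H H' : Type*} [Group H] [Group H']

@[simp]
theorem cm_one_left (a : H) : cm 1 a = 1 := by simp [cm]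

theorem cm_eq_one_iff_commute {a b : H} : cm a b = 1 ↔ Commute a b := by
  rw [cm, mul_assoc, ← mul_inv_rev, inv_mul_eq_one, eq_comm]
  exact Iff.rfl

theorem cm_mul_left (a b c : H) : cm (a * b) c = cm a c * cm (cm a c) b * cm b c := by
  simp only [cm]; group

theorem cm_mul_right (a b c : H) : cm a (b * c) = cm a c * cm a b * cm (cm a b) c := by
  simp only [cm]; group

theorem inv_cm (a b : H) : (cm a b)⁻¹ = cm b a := by
  simp only [cm]; group

theorem conj_eq_mul_cm (a b : H) : b⁻¹ * a * b = a * cm a b := by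
  simp only [cm]; group

theorem map_cm (φ : H →* H') (a b : H) : φ (cm a b) = cm (φ a) (φ b) := by
  simp [cm]

theorem CommWord.map_eval (φ : H →* H') (a b : H) (u : CommWord) :
    φ (u.eval a b) = u.eval (φ a) (φ b) := by
  induction u with
  | x => rfl
  | y => rfl
  | comm u v hu hv => simp only [eval, map_cm, hu, hv]

end CommutatorIdentities

/-- A decreasing family of subgroups of `H` with `[F i, F j] ≤ F (i + j)`. The degrees range over
an additive monoid `ι`, with `i + j` regarded as lying above `i`: for `ι = ℕ` these are the usual
(strongly central) filtrations, and `ι = ℕ × ℕ` keeps track of the weight in `x, y` together with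
the weight in `y`. -/
structure CommFiltration (ι H : Type*) [Add ι] [Group H] where
  toFun : ι → Subgroup H
  add_le' : ∀ i j, toFun (i + j) ≤ toFun i
  cm_mem' : ∀ {i j g h}, g ∈ toFun i → h ∈ toFun j → cm g h ∈ toFun (i + j)

namespace CommFiltration

section Basic

variable {ι H H' : Type*} [AddCommMonoid ι] [Group H] [Group H']

instance : CoeFun (CommFiltration ι H) fun _ => ι → Subgroup H := ⟨toFun⟩

variable (F : CommFiltration ι H) {i j k l e : ι} {f f' f'' g g' h h' : H}

theorem cm_mem (hg : g ∈ F i) (hh : h ∈ F j) : cm g h ∈ F (i + j) := F.cm_mem' hg hh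

theorem mem_of_eq_add (hg : g ∈ F i) (hi : i = k + l) : g ∈ F k :=
  F.add_le' k l (hi ▸ hg)

theorem cm_mem_of_eq (hg : g ∈ F i) (hh : h ∈ F j) (hij : i + j = k + l) : cm g h ∈ F k :=
  F.mem_of_eq_add (F.cm_mem hg hh) hij

theorem cm_mem_left (hg : g ∈ F i) (hh : h ∈ F j) : cm g h ∈ F i :=
  F.cm_mem_of_eq hg hh rfl

theorem conj_mem (hg : g ∈ F i) (hh : h ∈ F j) : h⁻¹ * g * h ∈ F i := by
  rw [conj_eq_mul_cm]
  exact mul_mem hg (F.cm_mem_left hg hh)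

theorem mul_mem_of_eq_add (hg : g ∈ F i) (hh : h ∈ F j) (hj : j = i + l) : g * h ∈ F i :=
  mul_mem hg (F.mem_of_eq_add hh hj)

theorem inv_cm_mul_cm_mem (hg : g ∈ F i) (hg' : g' ∈ F (i + e)) (hh : h ∈ F j)
    (hh' : h' ∈ F (j + e)) : (cm g h)⁻¹ * cm (g * g') (h * h') ∈ F (i + j + e) := by
  have expand : (cm g h)⁻¹ * cm (g * g') (h * h') =
      cm g h' * cm (cm g h') (cm g h) * cm (cm g h) h' *
        cm (cm g h' * cm g h * cm (cm g h) h') g' * cm g' (h * h') := by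
    simp only [cm]; group
  have hgh : cm g h ∈ F (i + j) := F.cm_mem hg hh
  have hgh' : cm g h' ∈ F (i + j + e) := F.cm_mem_of_eq (l := 0) hg hh' (by abel)
  have hghh' : cm (cm g h) h' ∈ F (i + j + e) := F.cm_mem_of_eq (l := j) hgh hh' (by abel)
  have hprod : cm g h' * cm g h * cm (cm g h) h' ∈ F (i + j) :=
    mul_mem (mul_mem (F.mem_of_eq_add hgh' rfl) hgh) (F.mem_of_eq_add hghh' rfl)
  rw [expand]
  refine mul_mem (mul_mem (mul_mem (mul_mem hgh' (F.cm_mem_left hgh' hgh)) hghh') ?_) ?_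
  · exact F.cm_mem_of_eq (l := i) hprod hg' (by abel)
  · exact F.cm_mem_of_eq (l := 0) hg' (F.mul_mem_of_eq_add hh hh' rfl) (by abel)

instance : InfSet (CommFiltration ι H) where
  sInf s :=
    { toFun := fun i => ⨅ F ∈ s, F i
      add_le' := fun i j => iInf₂_mono fun F _ => F.add_le' i j
      cm_mem' := fun {i j g h} hg hh => by
        simp only [Subgroup.mem_iInf] at hg hh ⊢
        exact fun F hF => F.cm_mem (hg F hF) (hh F hF) }

theorem mem_sInf {s : Set (CommFiltration ι H)} : g ∈ sInf s i ↔ ∀ F ∈ s, g ∈ F i := by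
  change g ∈ (⨅ F ∈ s, F i) ↔ _
  simp only [Subgroup.mem_iInf]

/-- The preimage of a filtration under a group homomorphism. -/
def comap (φ : H' →* H) : CommFiltration ι H' where
  toFun i := (F i).comap φ
  add_le' i j := Subgroup.comap_mono (F.add_le' i j)
  cm_mem' hg hh := by
    rw [Subgroup.mem_comap, map_cm]
    exact F.cm_mem hg hh

variable {F} in
theorem mem_comap {φ : H' →* H} {g : H'} : g ∈ F.comap φ i ↔ φ g ∈ F i := Iff.rfl

/-- The smallest filtration in which each `g` with `(i, g) ∈ S` has degree `i`. -/
def generate (S : Set (ι × H)) : CommFiltration ι H := sInf {F | ∀ p ∈ S, p.2 ∈ F p.1}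

theorem mem_generate {S : Set (ι × H)} {p : ι × H} (hp : p ∈ S) : p.2 ∈ generate S p.1 :=
  mem_sInf.2 fun _ hF => hF p hp

variable {F} in
theorem generate_le {S : Set (ι × H)} (hS : ∀ p ∈ S, p.2 ∈ F p.1) (i : ι) :
    generate S i ≤ F i :=
  fun _ hg => mem_sInf.1 hg F hS

theorem generate_mono {S T : Set (ι × H)} (hST : S ⊆ T) (i : ι) : generate S i ≤ generate T i :=
  generate_le (fun _ hp => mem_generate (hST hp)) i

/-- Congruence of group elements modulo a term of a filtration. -/
def ModEq (i : ι) (f g : H) : Prop := f⁻¹ * g ∈ F i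

variable {F}

namespace ModEq

theorem refl (f : H) : F.ModEq i f f := by simp [ModEq]

theorem symm (h : F.ModEq i f g) : F.ModEq i g f := by simpa [ModEq] using inv_mem h

theorem trans (h : F.ModEq i f f') (h' : F.ModEq i f' f'') : F.ModEq i f f'' := by
  simpa [ModEq, mul_assoc] using mul_mem h h'

instance : Trans (F.ModEq i) (F.ModEq i) (F.ModEq i) := ⟨trans⟩

theorem mul (h : F.ModEq i f f') (h' : F.ModEq i g g') (hg : g ∈ F j) :
    F.ModEq i (f * g) (f' * g') := by
  have expand : (f * g)⁻¹ * (f' * g') = g⁻¹ * (f⁻¹ * f') * g * (g⁻¹ * g') := by group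
  rw [ModEq, expand]
  exact mul_mem (F.conj_mem h hg) h'

theorem of_eq_add (h : F.ModEq i f g) (hi : i = k + l) : F.ModEq k f g := F.mem_of_eq_add h hi

end ModEq

theorem modEq_mul_right (hg : g ∈ F i) : F.ModEq i f (f * g) := by simpa [ModEq] using hg

theorem modEq_mul_comm (h : cm g f ∈ F i) : F.ModEq i (f * g) (g * f) := by
  have : (f * g)⁻¹ * (g * f) = cm g f := by simp only [cm]; group
  rwa [ModEq, this]

theorem modEq_mul_left (hf : f ∈ F i) (hg : g ∈ F j) : F.ModEq i (f * g) g := by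
  have : (f * g)⁻¹ * g = g⁻¹ * f⁻¹ * g := by group
  rw [ModEq, this]
  exact F.conj_mem (inv_mem hf) hg

theorem cm_mul_modEq (hf : cm (cm f h) g ∈ F i) (hg : cm g h ∈ F j) :
    F.ModEq i (cm (f * g) h) (cm f h * cm g h) := by
  rw [cm_mul_left]
  exact (modEq_mul_right hf).symm.mul (.refl _) hg

end Basic

end CommFiltration

/-- The multiplicative difference `g⁻¹ σ(g)` of an endomorphism `σ`. For the shift on sequences it
is the difference operator, for conjugation by `z` it is `g ↦ [g, z]`. -/
def delta {H : Type*} [Group H] (σ : H →* H) (g : H) : H := g⁻¹ * σ g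

section Delta

variable {H : Type*} [Group H] (σ : H →* H) (g h : H)

theorem delta_one : delta σ 1 = 1 := by simp [delta]

theorem delta_mul : delta σ (g * h) = delta σ g * cm (delta σ g) h * delta σ h := by
  simp only [delta, cm, map_mul]; group

theorem delta_inv : delta σ g⁻¹ = g⁻¹⁻¹ * (delta σ g)⁻¹ * g⁻¹ := by
  simp only [delta, map_inv]; group

theorem delta_cm : delta σ (cm g h) = (cm g h)⁻¹ * cm (g * delta σ g) (h * delta σ h) := by
  simp only [delta, map_cm, mul_inv_cancel_left]

theorem delta_cm_of_map_eq {h : H} (hh : σ h = h) :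
    delta σ (cm g h) = cm (cm g h) (delta σ g) * cm (delta σ g) h := by
  simp only [delta, cm, map_mul, map_inv, hh]; group

theorem delta_inv_mul :
    delta σ (g⁻¹ * h) = cm (g⁻¹ * h) (delta σ g) * ((delta σ g)⁻¹ * delta σ h) := by
  simp only [delta, cm, map_mul, map_inv]; group

theorem delta_conj (z : H) : delta (MulAut.conj z⁻¹).toMonoidHom g = cm g z := by
  simp [delta, cm, mul_assoc]

end Delta

namespace CommFiltration

section DeltaSub

variable {ι H : Type*} [AddCommMonoid ι] [Group H] {F : CommFiltration ι H} {σ : H →* H}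
  {i j e : ι} {f g z : H}

variable (F σ e) in
/-- The elements of each `F i` whose difference lies in `F (i + e)`. -/
def deltaSub : CommFiltration ι H where
  toFun i :=
    { carrier := {g | g ∈ F i ∧ delta σ g ∈ F (i + e)}
      one_mem' := ⟨one_mem _, by rw [delta_one]; exact one_mem _⟩
      mul_mem' := fun {g h} hg hh => ⟨mul_mem hg.1 hh.1, by
        rw [delta_mul]
        exact mul_mem (mul_mem hg.2 (F.cm_mem_left hg.2 hh.1)) hh.2⟩
      inv_mem' := fun {g} hg => ⟨inv_mem hg.1, by
        rw [delta_inv]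
        exact F.conj_mem (inv_mem hg.2) (inv_mem hg.1)⟩ }
  add_le' i j g hg := ⟨F.mem_of_eq_add hg.1 rfl, F.mem_of_eq_add hg.2 (add_right_comm i j e)⟩
  cm_mem' hg hh := ⟨F.cm_mem hg.1 hh.1, by
    rw [delta_cm]
    exact F.inv_cm_mul_cm_mem hg.1 hg.2 hh.1 hh.2⟩

theorem mem_deltaSub : g ∈ F.deltaSub σ e i ↔ g ∈ F i ∧ delta σ g ∈ F (i + e) := Iff.rfl

theorem delta_mem_generate {S : Set (ι × H)}
    (hS : ∀ p ∈ S, delta σ p.2 ∈ generate S (p.1 + e)) (hg : g ∈ generate S i) :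
    delta σ g ∈ generate S (i + e) :=
  (mem_deltaSub.1 (generate_le (F := (generate S).deltaSub σ e)
    (fun p hp => mem_deltaSub.2 ⟨mem_generate hp, hS p hp⟩) i hg)).2

theorem cm_mem_generate {S : Set (ι × H)} (hS : ∀ p ∈ S, cm p.2 z ∈ generate S (p.1 + e))
    (hg : g ∈ generate S i) : cm g z ∈ generate S (i + e) := by
  rw [← delta_conj]
  exact delta_mem_generate (fun p hp => by rw [delta_conj]; exact hS p hp) hg

theorem delta_mul_modEq (hf : cm (delta σ f) g ∈ F i) (hg : delta σ g ∈ F j) :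
    F.ModEq i (delta σ (f * g)) (delta σ f * delta σ g) := by
  rw [delta_mul]
  exact (modEq_mul_right hf).symm.mul (.refl _) hg

end DeltaSub

section Adjoin

variable {ι H : Type*} [AddCommMonoid ι] [Group H] {F B Z : CommFiltration ι H} {i j k e : ι}
  {g z : H}

/-- The union of an increasing sequence of filtrations. -/
def union (𝓕 : ℕ → CommFiltration ι H) (mono : ∀ i, Monotone fun m => 𝓕 m i) :
    CommFiltration ι H where
  toFun i := ⨆ m, 𝓕 m i
  add_le' i j := iSup_mono fun m => (𝓕 m).add_le' i j
  cm_mem' {i j g h} hg hh := by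
    rw [Subgroup.mem_iSup_of_directed (mono _).directed_le] at hg hh ⊢
    obtain ⟨m, hg⟩ := hg
    obtain ⟨n, hh⟩ := hh
    exact ⟨max m n, (𝓕 _).cm_mem (mono i (le_max_left m n) hg) (mono j (le_max_right m n) hh)⟩

theorem mem_union {𝓕 : ℕ → CommFiltration ι H} {mono : ∀ i, Monotone fun m => 𝓕 m i} :
    g ∈ union 𝓕 mono i ↔ ∃ m, g ∈ 𝓕 m i :=
  Subgroup.mem_iSup_of_directed (mono i).directed_le

theorem mem_comap_conj : g ∈ F.comap (MulAut.conj z⁻¹).toMonoidHom i ↔ z⁻¹ * g * z ∈ F i := by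
  simp only [mem_comap, MulEquiv.toMonoidHom_eq_coe, MonoidHom.coe_coe, MulAut.conj_apply, inv_inv]

theorem monotone_comap_conj (hF : ∀ i, ∀ g ∈ F i, z⁻¹ * g * z ∈ F i) (i : ι) :
    Monotone fun m : ℕ => F.comap (MulAut.conj (z ^ m)⁻¹).toMonoidHom i := by
  refine monotone_nat_of_le_succ fun m g hg => ?_
  rw [mem_comap_conj] at hg ⊢
  simpa only [pow_succ, mul_inv_rev, mul_assoc] using hF i _ hg

variable (F z) in
/-- The elements that are moved into `F i` by conjugation by a sufficiently large power of `z`,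
where conjugation by `z` maps each `F i` into itself. On the resulting filtration conjugation by
`z` is invertible. -/
def saturation (hF : ∀ i, ∀ g ∈ F i, z⁻¹ * g * z ∈ F i) : CommFiltration ι H :=
  union (fun m => F.comap (MulAut.conj (z ^ m)⁻¹).toMonoidHom) (monotone_comap_conj hF)

theorem mem_saturation {hF : ∀ i, ∀ g ∈ F i, z⁻¹ * g * z ∈ F i} :
    g ∈ F.saturation z hF i ↔ ∃ m : ℕ, (z ^ m)⁻¹ * g * z ^ m ∈ F i := by
  simp only [saturation, mem_union, mem_comap_conj]

theorem le_saturation (hF : ∀ i, ∀ g ∈ F i, z⁻¹ * g * z ∈ F i) (i : ι) :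
    F i ≤ F.saturation z hF i :=
  fun g hg => mem_saturation.2 ⟨0, by simpa using hg⟩

theorem saturation_eq_bot {hF : ∀ i, ∀ g ∈ F i, z⁻¹ * g * z ∈ F i} (hi : F i = ⊥) :
    F.saturation z hF i = ⊥ := by
  refine (Subgroup.eq_bot_iff_forall _).2 fun g hg => ?_
  obtain ⟨m, hm⟩ := mem_saturation.1 hg
  rw [hi, Subgroup.mem_bot] at hm
  simpa [mul_assoc, inv_mul_eq_iff_eq_mul, mul_eq_right] using hm

theorem cm_mem_saturation {hF : ∀ i, ∀ g ∈ F i, z⁻¹ * g * z ∈ F i}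
    (hz : ∀ i, ∀ g ∈ F i, cm g z ∈ F (i + e)) (hg : g ∈ F.saturation z hF i) :
    cm g z ∈ F.saturation z hF (i + e) := by
  obtain ⟨m, hm⟩ := mem_saturation.1 hg
  refine mem_saturation.2 ⟨m, ?_⟩
  convert hz i _ hm using 1
  simp only [cm]; group

theorem conj_inv_mem_saturation {hF : ∀ i, ∀ g ∈ F i, z⁻¹ * g * z ∈ F i}
    (hg : g ∈ F.saturation z hF i) : z * g * z⁻¹ ∈ F.saturation z hF i := by
  obtain ⟨m, hm⟩ := mem_saturation.1 hg
  refine mem_saturation.2 ⟨m + 1, ?_⟩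
  convert hm using 1
  rw [pow_succ']; group

variable (B i) in
/-- The elements `c` of degree `i` relative to `B`: commutation with `c` and with `c⁻¹` raises
the `B`-degree by `i`. -/
def idealizer : Subgroup H where
  carrier := {c | ∀ j, ∀ g ∈ B j, cm g c ∈ B (j + i) ∧ cm g c⁻¹ ∈ B (j + i)}
  one_mem' j g _ := by simp [cm, one_mem]
  mul_mem' {c d} hc hd j g hg := by
    have key : ∀ {c d : H}, cm g c ∈ B (j + i) → (∀ l, ∀ h ∈ B l, cm h d ∈ B (l + i)) →
        cm g (c * d) ∈ B (j + i) := fun hgc hd => by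
      rw [cm_mul_right]
      exact mul_mem (mul_mem (hd j g hg) hgc) (B.mem_of_eq_add (hd _ _ hgc) rfl)
    rw [mul_inv_rev]
    exact ⟨key (hc j g hg).1 fun l h hh => (hd l h hh).1,
      key (hd j g hg).2 fun l h hh => (hc l h hh).2⟩
  inv_mem' {c} hc j g hg := by
    rw [inv_inv]
    exact (hc j g hg).symm

theorem mem_idealizer_saturation {hF : ∀ i, ∀ g ∈ F i, z⁻¹ * g * z ∈ F i}
    (hz : ∀ i, ∀ g ∈ F i, cm g z ∈ F (i + e)) : z ∈ (F.saturation z hF).idealizer e := by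
  intro j g hg
  have hgz := cm_mem_saturation hz hg
  refine ⟨hgz, ?_⟩
  convert conj_inv_mem_saturation (inv_mem hgz) using 1
  simp only [cm]; group

theorem idealizer_add_le (i j : ι) : B.idealizer (i + j) ≤ B.idealizer i := fun _ hc l g hg =>
  ⟨B.mem_of_eq_add (hc l g hg).1 (add_assoc l i j).symm,
    B.mem_of_eq_add (hc l g hg).2 (add_assoc l i j).symm⟩

theorem le_idealizer (i : ι) : B i ≤ B.idealizer i := fun _ hc _ _ hg =>
  ⟨B.cm_mem hg hc, B.cm_mem hg (inv_mem hc)⟩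

theorem idealizer_le_normalizer (i j : ι) : B.idealizer i ≤ Subgroup.normalizer (B j) := by
  refine Subgroup.le_normalizer_iff.2 fun c hc g hg => ?_
  have : c * g * c⁻¹ = g * cm g c⁻¹ := by simp only [cm]; group
  rw [this]
  exact mul_mem hg (B.mem_of_eq_add (hc j g hg).2 rfl)

theorem cm_mem_of_mem_idealizer {c : H} (hc : c ∈ B.idealizer i) (hg : g ∈ B j) :
    cm g c ∈ B (j + i) ∧ cm c g ∈ B (i + j) := by
  refine ⟨(hc j g hg).1, ?_⟩
  rw [← inv_cm, add_comm]
  exact inv_mem (hc j g hg).1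

open scoped Pointwise in
variable (B Z) in
/-- The filtration with terms `Z i * B i`, for filtrations `Z` and `B` with `[B i, Z j] ⊆ B (i + j)`
for all `i` and `j`. -/
def semidirect (hZ : ∀ i, Z i ≤ B.idealizer i) : CommFiltration ι H where
  toFun i := Z i ⊔ B i
  add_le' i j := sup_le_sup (Z.add_le' i j) (B.add_le' i j)
  cm_mem' {i j g h} hg hh := by
    have hB : ∀ i, Z i ⊔ B i ≤ B.idealizer i := fun i => sup_le (hZ i) (le_idealizer i)
    have hmul : ∀ i, (↑(Z i ⊔ B i) : Set H) = Z i * B i := fun i =>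
      Subgroup.coe_mul_of_left_le_normalizer_right _ _ ((hZ i).trans (idealizer_le_normalizer i i))
    have hh' := hB j hh
    rw [← SetLike.mem_coe, hmul] at hg hh
    obtain ⟨c, hc, a, ha, rfl⟩ := hg
    obtain ⟨d, hd, b, hb, rfl⟩ := hh
    have hcd := Z.cm_mem hc hd
    have hch : cm c (d * b) ∈ Z (i + j) ⊔ B (i + j) := by
      rw [cm_mul_right]
      refine mul_mem (mul_mem (Subgroup.mem_sup_right ?_) (Subgroup.mem_sup_left hcd))
        (Subgroup.mem_sup_right ?_)
      · exact (cm_mem_of_mem_idealizer (hZ i hc) hb).2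
      · exact B.mem_of_eq_add (cm_mem_of_mem_idealizer (hZ _ hcd) hb).2 rfl
    rw [cm_mul_left]
    refine mul_mem (mul_mem hch (Subgroup.mem_sup_right ?_)) (Subgroup.mem_sup_right ?_)
    · exact B.mem_of_eq_add (cm_mem_of_mem_idealizer (hB _ hch) ha).2 rfl
    · exact (cm_mem_of_mem_idealizer hh' ha).1

theorem semidirect_apply (hZ : ∀ i, Z i ≤ B.idealizer i) (i : ι) :
    B.semidirect Z hZ i = Z i ⊔ B i := rfl

end Adjoin

section Elimination

variable {ι H : Type*} [AddCommMonoid ι] [Preorder ι] [CanonicallyOrderedAdd ι] [Group H]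
  {S : Set (ι × H)} {i k e : ι} {z : H}

/-- The filtration whose terms are the commutative subgroup `A` in the degrees that belong to `D`
and trivial in all others. -/
def truncation (A : Subgroup H) [IsMulCommutative A] {D : Set ι} (hD : IsLowerSet D) :
    CommFiltration ι H where
  toFun i := ⨆ _ : i ∈ D, A
  add_le' i j := iSup_mono' fun hij => ⟨hD le_self_add hij, le_rfl⟩
  cm_mem' {i j g h} hg hh := by
    have hle : ∀ i, (⨆ _ : i ∈ D, A) ≤ A := fun i => iSup_le fun _ => le_rfl
    rw [cm_eq_one_iff_commute.2 (setLike_mul_comm (hle i hg) (hle j hh))]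
    exact one_mem _

section Truncation

variable {A : Subgroup H} [IsMulCommutative A] {D : Set ι} {hD : IsLowerSet D}

theorem truncation_of_mem (hi : i ∈ D) : truncation A hD i = A := iSup_pos hi

theorem truncation_of_notMem (hi : i ∉ D) : truncation A hD i = ⊥ := iSup_neg hi

end Truncation

theorem truncation_zpowers_le_idealizer {B : CommFiltration ι H} (hz : z ∈ B.idealizer e) (i : ι) :
    truncation (Subgroup.zpowers z) (isLowerSet_Iic e) i ≤ B.idealizer i := by
  refine iSup_le fun hi => ?_
  obtain ⟨j, rfl⟩ := le_iff_exists_add.1 hi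
  exact Subgroup.zpowers_le.2 (idealizer_add_le i j hz)

theorem generate_insert_eq_bot (hz : ∀ p ∈ S, cm p.2 z ∈ generate S (p.1 + e)) (hk : ¬ k ≤ e)
    (hS : generate S k = ⊥) : generate (insert (e, z) S) k = ⊥ := by
  have hcm : ∀ i, ∀ g ∈ generate S i, cm g z ∈ generate S (i + e) := fun i g hg =>
    cm_mem_generate hz hg
  have hconj : ∀ i, ∀ g ∈ generate S i, z⁻¹ * g * z ∈ generate S i := fun i g hg => by
    rw [conj_eq_mul_cm]
    exact mul_mem hg ((generate S).mem_of_eq_add (hcm i g hg) rfl)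
  let B := (generate S).saturation z hconj
  let Z := truncation (Subgroup.zpowers z) (isLowerSet_Iic e)
  have hZ : ∀ i, Z i ≤ B.idealizer i :=
    truncation_zpowers_le_idealizer (mem_idealizer_saturation hcm)
  have hle : generate (insert (e, z) S) k ≤ B.semidirect Z hZ k := by
    refine generate_le (fun p hp => ?_) k
    rw [semidirect_apply]
    rcases hp with rfl | hp
    · refine Subgroup.mem_sup_left ?_
      rw [truncation_of_mem Set.self_mem_Iic]
      exact Subgroup.mem_zpowers z
    · exact Subgroup.mem_sup_right (le_saturation hconj _ (mem_generate hp))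
  rwa [semidirect_apply, truncation_of_notMem (Set.mem_Iic.not.2 hk), saturation_eq_bot hS,
    bot_sup_eq, le_bot_iff] at hle

theorem generate_eq_bot_of_commute (hS : ∀ p ∈ S, ∀ q ∈ S, Commute p.2 q.2)
    (hk : ∀ p ∈ S, k ≤ p.1 → p.2 = 1) : generate S k = ⊥ := by
  have := Subgroup.isMulCommutative_closure (k := Prod.snd '' S) <| by
    rintro _ ⟨p, hp, rfl⟩ _ ⟨q, hq, rfl⟩
    exact hS p hp q hq
  have hD := (isUpperSet_Ici k).compl
  refine eq_bot_iff.2 (le_trans (generate_le (F := truncation (.closure (Prod.snd '' S)) hD) ?_ k)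
    (truncation_of_notMem (not_not.2 le_rfl)).le)
  intro p hp
  by_cases hkp : k ≤ p.1
  · rw [hk p hp hkp]
    exact one_mem _
  · rw [truncation_of_mem hkp]
    exact Subgroup.subset_closure ⟨p, hp, rfl⟩

end Elimination

section Core

variable {ι H : Type*} [AddCommMonoid ι] [Group H] {F : CommFiltration ι H} {σ : H →* H}
  {i e : ι} {g h w : H}

theorem mem_iterate_deltaSub {n : ℕ} : g ∈ ((fun E => E.deltaSub σ e)^[n] F) i ↔
    ∀ k ≤ n, (delta σ)^[k] g ∈ F (i + k • e) := by
  induction n generalizing i g with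
  | zero => simp
  | succ n ih =>
    rw [Function.iterate_succ_apply', mem_deltaSub, ih, ih]
    refine ⟨fun hg k hk => ?_, fun hg => ⟨fun k hk => hg k (by omega), fun k hk => ?_⟩⟩
    · rcases k with _ | k
      · exact hg.1 0 (by omega)
      · rw [succ_nsmul', ← add_assoc]
        exact hg.2 k (by omega)
    · rw [add_assoc, ← succ_nsmul']
      exact hg (k + 1) (by omega)

variable (F σ e) in
/-- The elements of degree `i` in `F` whose successive differences have degrees `i + e`,
`i + 2 • e`, .... -/
def core : CommFiltration ι H := sInf (Set.range fun n => (fun E => E.deltaSub σ e)^[n] F)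

theorem mem_core_iff_forall_iterate :
    g ∈ F.core σ e i ↔ ∀ n, g ∈ ((fun E => E.deltaSub σ e)^[n] F) i := by
  simp [core, mem_sInf]

theorem mem_core : g ∈ F.core σ e i ↔ ∀ k, (delta σ)^[k] g ∈ F (i + k • e) := by
  simp only [mem_core_iff_forall_iterate, mem_iterate_deltaSub]
  exact ⟨fun hg k => hg k k le_rfl, fun hg _ k _ => hg k⟩

theorem core_le (i : ι) : F.core σ e i ≤ F i := fun _ hg =>
  mem_core_iff_forall_iterate.1 hg 0

theorem delta_mem_core (hg : g ∈ F.core σ e i) : delta σ g ∈ F.core σ e (i + e) :=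
  mem_core_iff_forall_iterate.2 fun n => by
    have := mem_core_iff_forall_iterate.1 hg (n + 1)
    rw [Function.iterate_succ_apply'] at this
    exact this.2

theorem mem_core_of_delta_eq (hw : w ∈ F i) (hg : g ∈ F.core σ e e) (hh : h ∈ F.core σ e (i + e))
    (hδ : delta σ w = cm w g * h) : w ∈ F.core σ e i := by
  simp only [mem_core_iff_forall_iterate] at hg hh ⊢
  intro n
  induction n with
  | zero => exact hw
  | succ n ih =>
    rw [Function.iterate_succ_apply', mem_deltaSub, hδ]
    exact ⟨ih, mul_mem (cm_mem _ ih (hg n)) (hh n)⟩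

end Core

section Poly

variable {ι H : Type*} [Group H]

/-- The shift `f ↦ (n ↦ f (n + 1))` on sequences; the associated `delta` is the difference
operator. -/
def shift : (ℕ → H) →* (ℕ → H) where
  toFun f n := f (n + 1)
  map_one' := rfl
  map_mul' _ _ := rfl

theorem delta_shift_apply (f : ℕ → H) (n : ℕ) : delta shift f n = (f n)⁻¹ * f (n + 1) := rfl

theorem iterate_delta_shift_congr {f g : ℕ → H} {k n : ℕ} (hfg : ∀ m ≤ n + k, f m = g m) :
    (delta shift)^[k] f n = (delta shift)^[k] g n := by
  induction k generalizing f g with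
  | zero => exact hfg n le_rfl
  | succ k ih =>
    refine ih fun m hm => ?_
    rw [delta_shift_apply, delta_shift_apply, hfg m (by omega), hfg (m + 1) (by omega)]

theorem iterate_delta_shift_zero {f : ℕ → H} {m : ℕ} (hf : ∀ n < m, f n = 1) :
    (delta shift)^[m] f 0 = f m := by
  induction m generalizing f with
  | zero => rfl
  | succ m ih =>
    have hδ : ∀ n ≤ m, delta shift f n = f (n + 1) := fun n hn => by
      rw [delta_shift_apply, hf n (by omega), inv_one, one_mul]
    rw [Function.iterate_succ_apply, ih fun n hn => ?_, hδ m le_rfl]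
    rw [hδ n hn.le, hf (n + 1) (by omega)]

/-- The binomial sequence `n ↦ c ^ (n choose j)`. -/
def binomPow (c : H) (j : ℕ) : ℕ → H := fun n => c ^ n.choose j

theorem binomPow_zero (c : H) : binomPow c 0 = Function.const ℕ c := by
  funext n
  simp [binomPow]

theorem delta_binomPow_succ (c : H) (j : ℕ) :
    delta shift (binomPow c (j + 1)) = binomPow c j := by
  funext n
  simp only [delta_shift_apply, binomPow, Nat.choose_succ_succ', add_comm (n.choose j), pow_add,
    inv_mul_cancel_left]

theorem shift_const (c : H) : shift (Function.const ℕ c) = Function.const ℕ c := rfl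

theorem delta_binomPow_one (c : H) : delta shift (binomPow c 1) = Function.const ℕ c := by
  rw [delta_binomPow_succ, binomPow_zero]

variable [AddCommMonoid ι] (F : CommFiltration ι H) (e : ι)

/-- The filtration on `α → H` whose degree `i` term consists of the functions with values in
`F i`. -/
def pi (α : Type*) : CommFiltration ι (α → H) :=
  sInf (Set.range fun n => F.comap (Pi.evalMonoidHom (fun _ => H) n))

/-- Polynomial sequences in the sense of Leibman: `f` has degree `i` if its `k`-th successive
difference takes values in `F (i + k • e)`, for all `k`. -/
def poly : CommFiltration ι (ℕ → H) := (F.pi ℕ).core shift e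

variable {F e} {i j : ι} {f g h w : ℕ → H} {c : H}

theorem mem_pi {α : Type*} {f : α → H} : f ∈ F.pi α i ↔ ∀ n, f n ∈ F i := by
  simp [pi, mem_sInf, mem_comap]

theorem mem_poly : f ∈ F.poly e i ↔ ∀ k n, (delta shift)^[k] f n ∈ F (i + k • e) := by
  simp only [poly, mem_core, mem_pi]

theorem apply_mem_of_mem_poly (hf : f ∈ F.poly e i) (n : ℕ) : f n ∈ F i :=
  mem_pi.1 (core_le i hf) n

theorem delta_mem_poly (hf : f ∈ F.poly e i) : delta shift f ∈ F.poly e (i + e) :=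
  delta_mem_core hf

theorem mem_poly_of_delta_eq (hw : w 0 ∈ F i) (hg : g ∈ F.poly e e) (hh : h ∈ F.poly e (i + e))
    (hδ : delta shift w = cm w g * h) : w ∈ F.poly e i := by
  refine mem_core_of_delta_eq (mem_pi.2 fun n => ?_) hg hh hδ
  induction n with
  | zero => exact hw
  | succ n ih =>
    have hn : w (n + 1) = w n * (cm (w n) (g n) * h n) := by
      rw [← mul_inv_cancel_left (w n) (w (n + 1)), ← delta_shift_apply, hδ]
      rfl
    rw [hn]
    exact mul_mem ih (mul_mem (F.cm_mem_left ih (apply_mem_of_mem_poly hg n))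
      (F.mem_of_eq_add (apply_mem_of_mem_poly hh n) rfl))

theorem mem_poly_of_forall_exists_eqOn (hf : ∀ M, ∃ g ∈ F.poly e i, ∀ n ≤ M, f n = g n) :
    f ∈ F.poly e i := by
  refine mem_poly.2 fun k n => ?_
  obtain ⟨g, hg, hfg⟩ := hf (n + k)
  rw [iterate_delta_shift_congr hfg]
  exact mem_poly.1 hg k n

theorem const_mem_poly (hc : c ∈ F i) : Function.const ℕ c ∈ F.poly e i :=
  mem_poly_of_delta_eq hc (one_mem _) (one_mem _) (by funext n; simp [delta_shift_apply, cm])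

theorem binomPow_mem_poly {j : ℕ} (hc : c ∈ F (i + j • e)) : binomPow c j ∈ F.poly e i := by
  induction j generalizing i with
  | zero =>
    rw [binomPow_zero]
    exact const_mem_poly (by rwa [zero_nsmul, add_zero] at hc)
  | succ j ih =>
    have hδ : delta shift (binomPow c (j + 1)) = cm (binomPow c (j + 1)) 1 * binomPow c j := by
      rw [delta_binomPow_succ]
      simp [cm]
    refine mem_poly_of_delta_eq ?_ (one_mem _) (ih ?_) hδ
    · simp [binomPow, one_mem]
    · rwa [add_assoc, ← succ_nsmul']

/-- Taylor expansion: after removal of the factor `n ↦ (f m) ^ (n choose m)` a polynomial sequence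
`f` that vanishes below `m` also vanishes at `m`. -/
theorem apply_mem_of_pow_choose_mem {K : Subgroup H} {f : ℕ → H} {m N : ℕ} (hf : f ∈ F.poly e i)
    (hm : ∀ n < m, f n = 1) (hK : ∀ j, m ≤ j → j ≤ N → ∀ d ∈ F (i + j • e), d ^ N.choose j ∈ K) :
    f N ∈ K := by
  obtain hN | hN := lt_or_ge N m
  · rw [hm N hN]
    exact one_mem K
  have hfm : f m ∈ F (i + m • e) := iterate_delta_shift_zero hm ▸ mem_poly.1 hf m 0
  have hb : binomPow (f m) m ∈ F.poly e i := binomPow_mem_poly hfm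
  have hbelow : ∀ n < m + 1, ((binomPow (f m) m)⁻¹ * f) n = 1 := fun n hn => by
    obtain hn | rfl := Nat.lt_succ_iff_lt_or_eq.1 hn
    · simp [binomPow, Nat.choose_eq_zero_of_lt hn, hm n hn]
    · simp [binomPow]
  have hrest := apply_mem_of_pow_choose_mem (mul_mem (inv_mem hb) hf) hbelow
    fun j hj => hK j (by omega)
  simpa [binomPow] using mul_mem (hK m le_rfl hN _ hfm) hrest
termination_by N + 1 - m

end Poly

section CollectedProd

variable {ι H : Type*} [AddCommMonoid ι] [Group H]

theorem itcomm_mem {F : CommFiltration ι H} {e d : ι} {a b : H} (ha : a ∈ F e) (hb : b ∈ F (d + e))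
    (k : ℕ) : itcomm b a k ∈ F (d + (k + 1) • e) := by
  induction k with
  | zero => simpa [itcomm] using hb
  | succ k ih =>
    rw [succ_nsmul, ← add_assoc]
    exact F.cm_mem ih ha

/-- The sequence `n ↦ b ^ n * [b, a] ^ (n choose 2) * [b, a, a] ^ (n choose 3) * ⋯`, truncated after
`M` factors. -/
def collectedProd (a b : H) (M : ℕ) : ℕ → H :=
  ((List.range M).map fun k => binomPow (itcomm b a k) (k + 1)).prod

theorem collectedProd_succ (a b : H) (M : ℕ) :
    collectedProd a b (M + 1) = collectedProd a b M * binomPow (itcomm b a M) (M + 1) :=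
  List.prod_range_succ _ M

theorem collectedProd_apply_of_le (a b : H) {M n : ℕ} (hn : n ≤ M) :
    collectedProd a b M n = collectedProd a b n n := by
  induction M, hn using Nat.le_induction with
  | base => rfl
  | succ M hn ih =>
    simp [collectedProd_succ, ih, binomPow, Nat.choose_eq_zero_of_lt (Nat.lt_succ_of_le hn)]

theorem collectedProd_succ_apply (a b : H) (M n : ℕ) : collectedProd a b (M + 1) n =
    b ^ n * ((List.range M).map fun k => itcomm b a (k + 1) ^ n.choose (k + 2)).prod := by
  simp [collectedProd, List.prod_range_succ', Pi.list_prod_apply, Function.comp_def, binomPow,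
    itcomm]

variable {F : CommFiltration ι H} {e d i k : ι} {a b c z : H} {f g : ℕ → H}

theorem modEq_poly_of_delta (hf : f ∈ F.poly e k) (h0 : f 0 = g 0)
    (hδ : (F.poly e).ModEq (i + e) (delta shift f) (delta shift g)) : (F.poly e).ModEq i f g :=
  mem_poly_of_delta_eq (by simp [h0, one_mem])
    ((F.poly e).mem_of_eq_add (delta_mem_poly hf) (add_comm k e)) hδ (delta_inv_mul shift f g)

theorem cm_binomPow_modEq {j : ℕ} (hc : c ∈ F (i + j • e)) (hz : z ∈ F k) :
    (F.poly e).ModEq (i + i + k) (cm (binomPow c j) (Function.const ℕ z))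
      (binomPow (cm c z) j) := by
  have hz' : Function.const ℕ z ∈ F.poly e k := const_mem_poly hz
  induction j generalizing i with
  | zero =>
    simp only [binomPow_zero]
    exact .refl _
  | succ j ih =>
    have hc' : c ∈ F (i + e + j • e) := by rwa [add_assoc, ← succ_nsmul']
    have hb := binomPow_mem_poly hc
    have hb' := binomPow_mem_poly hc'
    have hbz := cm_mem _ hb hz'
    refine modEq_poly_of_delta hbz (by simp [binomPow, cm]) ?_
    rw [delta_cm_of_map_eq _ _ (shift_const z), delta_binomPow_succ, delta_binomPow_succ]
    refine .trans (modEq_mul_left ?_ (cm_mem _ hb' hz')) ((ih hc').of_eq_add (l := e) (by abel))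
    exact cm_mem_of_eq (l := 0) _ hbz hb' (by abel)

theorem collectedProd_mem_poly (ha : a ∈ F e) (hb : b ∈ F (d + e)) (M : ℕ) :
    collectedProd a b M ∈ F.poly e d := by
  refine list_prod_mem fun f hf => ?_
  obtain ⟨k, -, rfl⟩ := List.mem_map.1 hf
  exact binomPow_mem_poly (itcomm_mem ha hb k)

theorem delta_collectedProd_modEq (ha : a ∈ F e) (hb : b ∈ F (d + e)) (M : ℕ) :
    (F.poly e).ModEq (d + d + e) (delta shift (collectedProd a b (M + 1)))
      (cm (collectedProd a b M) (Function.const ℕ a) * Function.const ℕ b) := by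
  set A := Function.const ℕ a
  set B := Function.const ℕ b
  set V := collectedProd a b
  have hA : A ∈ F.poly e e := const_mem_poly ha
  have hB : B ∈ F.poly e (d + e) := const_mem_poly hb
  have hV : ∀ M, V M ∈ F.poly e d := collectedProd_mem_poly ha hb
  induction M with
  | zero =>
    have hV1 : V 1 = binomPow b 1 := (collectedProd_succ a b 0).trans (one_mul _)
    rw [hV1, show V 0 = 1 from rfl, delta_binomPow_one, cm_one_left, one_mul]
    exact .refl _
  | succ M ih =>
    set f := binomPow (itcomm b a M) (M + 1)
    set g := binomPow (itcomm b a (M + 1)) (M + 1 + 1)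
    have hVf : V (M + 1) = V M * f := collectedProd_succ a b M
    have hVg : V (M + 1 + 1) = V (M + 1) * g := collectedProd_succ a b (M + 1)
    have hf : f ∈ F.poly e d := binomPow_mem_poly (itcomm_mem ha hb M)
    have hg : g ∈ F.poly e d := binomPow_mem_poly (itcomm_mem ha hb (M + 1))
    have hg' : delta shift g ∈ F.poly e (d + e) := delta_mem_poly hg
    have hδg : (F.poly e).ModEq (d + d + e) (delta shift g) (cm f A) := by
      rw [delta_binomPow_succ]
      exact (cm_binomPow_modEq (itcomm_mem ha hb M) ha).symm
    calc (F.poly e).ModEq (d + d + e)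
          (delta shift (V (M + 1 + 1))) (delta shift (V (M + 1)) * delta shift g) := by
          rw [hVg]
          refine delta_mul_modEq (cm_mem_of_eq (l := 0) _ (delta_mem_poly (hV _)) hg ?_) hg'
          abel
      (F.poly e).ModEq (d + d + e) _ (cm (V M) A * B * delta shift g) := ih.mul (.refl _) hg'
      (F.poly e).ModEq (d + d + e) _ (cm (V M) A * (delta shift g * B)) := by
          rw [mul_assoc]
          refine .mul (.refl _) (modEq_mul_comm ?_) (mul_mem hB hg')
          exact cm_mem_of_eq (l := e) _ hg' hB (by abel)
      (F.poly e).ModEq (d + d + e) _ (cm (V M) A * (cm f A * B)) :=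
          .mul (.refl _) (hδg.mul (.refl _) hB) (mul_mem hg' hB)
      (F.poly e).ModEq (d + d + e) _ (cm (V (M + 1)) A * B) := by
          rw [hVf, ← mul_assoc]
          refine .mul (cm_mul_modEq ?_ (cm_mem _ hf hA)).symm (.refl _) hB
          exact cm_mem_of_eq (l := 0) _ (cm_mem _ (hV M) hA) hf (by abel)

theorem collect_mem_poly (ha : a ∈ F e) (hb : b ∈ F (d + e)) :
    (fun n => (collectedProd a b n n)⁻¹ * ((a ^ n)⁻¹ * (a * b) ^ n)) ∈ F.poly e (d + d) := by
  set A := Function.const ℕ a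
  set B := Function.const ℕ b
  set V : ℕ → H := fun n => collectedProd a b n n
  set u : ℕ → H := fun n => (a ^ n)⁻¹ * (a * b) ^ n
  change V⁻¹ * u ∈ _
  have hA : A ∈ F.poly e e := const_mem_poly ha
  have hB : B ∈ F.poly e (d + e) := const_mem_poly hb
  have hδV : (F.poly e).ModEq (d + d + e) (delta shift V) (cm V A * B) := by
    refine mem_poly_of_forall_exists_eqOn fun M => ⟨_, delta_collectedProd_modEq ha hb M, ?_⟩
    intro n hn
    simp [V, A, B, delta_shift_apply, cm, collectedProd_apply_of_le a b hn,
      collectedProd_apply_of_le a b (show n ≤ M + 1 by omega),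
      collectedProd_apply_of_le a b (show n + 1 ≤ M + 1 by omega)]
  have hδu : delta shift u = cm u A * B := by
    funext n
    simp only [u, A, B, delta_shift_apply, cm, Pi.mul_apply, Pi.inv_apply, Function.const_apply,
      pow_succ]
    group
  have hδ : delta shift (V⁻¹ * u) =
      cm (V⁻¹ * u) (A * B * ((delta shift V)⁻¹ * (cm V A * B))⁻¹) *
        ((delta shift V)⁻¹ * (cm V A * B)) := by
    rw [delta_inv_mul, hδu]
    simp only [cm]
    group
  refine mem_poly_of_delta_eq ?_ ?_ hδV hδ
  · simp [V, u, collectedProd, one_mem]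
  · refine mul_mem (mul_mem hA ?_) (inv_mem ?_)
    · exact (F.poly e).mem_of_eq_add hB (add_comm d e)
    · exact (F.poly e).mem_of_eq_add hδV (add_comm _ e)

end CollectedProd

section Powers

variable {ι H : Type*} [AddCommMonoid ι] [Group H] {F : CommFiltration ι H} {e : ι} {a b d : H}
  {K : Subgroup H} {N : ℕ} {S : Set H}

theorem mul_pow_mem (ha : a ∈ F e) (hb : b ∈ F e) (haK : a ^ N ∈ K) (hbK : b ^ N ∈ K)
    (hK : ∀ j, 2 ≤ j → j ≤ N → ∀ c ∈ F (j • e), c ^ N.choose j ∈ K) : (a * b) ^ N ∈ K := by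
  have hpoly : ∀ c ∈ F e, binomPow c 1 ∈ F.poly e 0 := fun c hc =>
    binomPow_mem_poly (by rwa [zero_add, one_nsmul])
  have hratio : (binomPow a 1 * binomPow b 1)⁻¹ * binomPow (a * b) 1 ∈ F.poly e 0 :=
    mul_mem (inv_mem (mul_mem (hpoly a ha) (hpoly b hb))) (hpoly _ (mul_mem ha hb))
  have hN := apply_mem_of_pow_choose_mem (K := K) (m := 2) (N := N) hratio
    (fun n hn => by interval_cases n <;> simp [binomPow]) (by simpa only [zero_add] using hK)
  simpa [binomPow, mul_assoc] using mul_mem (mul_mem haK hbK) hN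

theorem pow_mem_of_mem_normalClosure (hF : F 0 = ⊤) (hKn : K.Normal)
    (hSF : ∀ g ∈ S, g ∈ F e) (hSK : ∀ g ∈ S, g ^ N ∈ K)
    (hK : ∀ j, 2 ≤ j → j ≤ N → ∀ c ∈ F (j • e), c ^ N.choose j ∈ K)
    (hd : d ∈ Subgroup.normalClosure S) : d ^ N ∈ K := by
  suffices d ∈ F e ∧ d ^ N ∈ K from this.2
  induction hd using Subgroup.closure_induction with
  | mem g hg =>
    obtain ⟨s, hs, hsg⟩ := Group.mem_conjugatesOfSet_iff.1 hg
    obtain ⟨w, rfl⟩ := isConj_iff.1 hsg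
    have hw : w⁻¹ ∈ F 0 := hF ▸ Subgroup.mem_top _
    refine ⟨?_, ?_⟩
    · simpa only [inv_inv] using F.conj_mem (hSF s hs) hw
    · rw [conj_pow]
      exact hKn.conj_mem _ (hSK s hs) w
  | one => exact ⟨one_mem _, by simp only [one_pow, one_mem]⟩
  | mul a b _ _ ha hb => exact ⟨mul_mem ha.1 hb.1, mul_pow_mem ha.1 hb.1 ha.2 hb.2 hK⟩
  | inv a _ ha => exact ⟨inv_mem ha.1, inv_pow a N ▸ inv_mem ha.2⟩

end Powers

end CommFiltration

theorem exists_pow_le_and_pow_sub_dvd_choose {p s j : ℕ} (hp : p.Prime) (hj : 0 < j)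
    (hjs : j ≤ p ^ s) : ∃ v ≤ s, p ^ v ≤ j ∧ p ^ (s - v) ∣ (p ^ s).choose j := by
  have hval := Nat.factorization_choose_prime_pow_add_factorization hp hjs hj.ne'
  have hle : p ^ j.factorization p ≤ j := Nat.ordProj_le p hj.ne'
  refine ⟨j.factorization p, by omega, hle, ?_⟩
  rw [Nat.sub_eq_of_eq_add hval.symm]
  exact Nat.ordProj_dvd _ p

namespace CommWord

section Order

variable {u v : CommWord}

theorem wt_pos (u : CommWord) : 0 < u.wt := by
  induction u with
  | x => exact one_pos
  | y => exact one_pos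
  | comm _ _ hu _ => exact Nat.add_pos_left hu _

theorem enc_injective : Function.Injective enc := by
  intro u v h
  induction u generalizing v with
  | x => cases v <;> simp_all [enc]
  | y => cases v <;> simp_all [enc]
  | comm u₁ u₂ h₁ h₂ =>
    cases v with
    | x => simp [enc] at h
    | y => simp [enc] at h
    | comm v₁ v₂ =>
      simp only [enc, add_left_inj, Nat.pair_eq_pair] at h
      rw [h₁ h.1, h₂ h.2]

theorem finite_setOf_wt_le (n : ℕ) : {u : CommWord | u.wt ≤ n}.Finite := by
  induction n with
  | zero => exact Set.finite_empty.subset fun u hu => ((wt_pos u).not_ge hu).elim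
  | succ n ih =>
    refine ((Set.toFinite {.x, .y}).union (ih.image2 comm ih)).subset fun u hu => ?_
    cases u with
    | x => exact .inl (.inl rfl)
    | y => exact .inl (.inr rfl)
    | comm u v =>
      have := wt_pos u
      have := wt_pos v
      simp only [Set.mem_ofPred_eq, wt] at hu
      exact .inr ⟨u, show u.wt ≤ n by omega, v, show v.wt ≤ n by omega, rfl⟩

theorem lt_iff_toLex_lt : lt u v ↔ toLex (u.wt, u.enc) < toLex (v.wt, v.enc) := by
  rw [Prod.Lex.toLex_lt_toLex, lt]

theorem lt_or_eq_or_gt (u v : CommWord) : lt u v ∨ u = v ∨ lt v u := by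
  simp only [lt_iff_toLex_lt]
  refine (lt_trichotomy _ _).imp_right (Or.imp_left fun h => enc_injective ?_)
  exact congrArg (fun q => (ofLex q).2) h

/-- The position of a commutator word in the enumeration of all words in increasing order. -/
noncomputable def rank (u : CommWord) : ℕ := {v | lt v u}.ncard

theorem finite_setOf_lt (u : CommWord) : {v | lt v u}.Finite :=
  (finite_setOf_wt_le u.wt).subset fun _ h => h.elim le_of_lt fun h => h.1.le

theorem rank_lt_rank (h : lt u v) : u.rank < v.rank := by
  refine Set.ncard_lt_ncard ⟨fun w hw => ?_, fun hvu => ?_⟩ (finite_setOf_lt v)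
  · simp only [Set.mem_ofPred_eq, lt_iff_toLex_lt] at hw h ⊢
    exact hw.trans h
  · exact (lt_iff_toLex_lt.1 (hvu h)).false

theorem rank_lt_rank_iff : u.rank < v.rank ↔ lt u v := by
  refine ⟨fun h => ?_, rank_lt_rank⟩
  obtain huv | rfl | hvu := lt_or_eq_or_gt u v
  · exact huv
  · exact h.false.elim
  · exact (h.not_gt (rank_lt_rank hvu)).elim

theorem rank_injective : Function.Injective rank := fun u v h => by
  obtain huv | huv | hvu := lt_or_eq_or_gt u v
  · exact ((rank_lt_rank huv).ne h).elim
  · exact huv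
  · exact ((rank_lt_rank hvu).ne' h).elim

theorem ncard_wt_lt_le_rank_iff {n : ℕ} : {v : CommWord | v.wt < n}.ncard ≤ u.rank ↔ n ≤ u.wt := by
  have hfin : {v : CommWord | v.wt < n}.Finite :=
    (finite_setOf_wt_le n).subset fun v (hv : v.wt < n) => hv.le
  refine ⟨fun h => ?_, fun h => ?_⟩
  · contrapose! h
    refine Set.ncard_lt_ncard ⟨fun v hv => ?_, fun hu => ?_⟩ hfin
    · exact (hv.elim le_of_lt fun hv => hv.1.le).trans_lt h
    · exact (lt_iff_toLex_lt.1 (hu h)).false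
  · exact Set.ncard_le_ncard (fun v hv => .inl (lt_of_lt_of_le hv h)) (finite_setOf_lt u)

theorem IsBasic.eq_x_of_wty_eq_zero (h : u.IsBasic) (h0 : u.wty = 0) : u = .x := by
  induction h with
  | x => rfl
  | y => simp [wty] at h0
  | comm _ _ hlt _ ihu ihv =>
    rw [wty, Nat.add_eq_zero_iff] at h0
    rw [ihu h0.1, ihv h0.2] at hlt
    exact (lt_iff_toLex_lt.1 hlt).false.elim

theorem IsBasic.wty_pos (h : u.IsBasic) (hu : 2 ≤ u.wt) : 0 < u.wty := by
  refine Nat.pos_of_ne_zero fun h0 => ?_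
  rw [h.eq_x_of_wty_eq_zero h0] at hu
  exact absurd hu (by decide)

end Order

section EliminationSet

variable {t : ℕ} {u v z : CommWord}

/-- The basic words that remain after Lazard elimination of the basic words of rank less than `t`:
those `u` of rank at least `t` such that if `u = [u₁, u₂]`, then `u₂` has been eliminated. -/
def eliminationSet (t : ℕ) : Set CommWord :=
  {u | u.IsBasic ∧ t ≤ u.rank ∧ ∀ u₁ u₂, u = comm u₁ u₂ → u₂.rank < t}

theorem isBasic_comm_of_mem_eliminationSet (hu : u ∈ eliminationSet t) (hv : v.IsBasic)
    (hvu : lt v u) (ht : t ≤ v.rank + 1) : (comm u v).IsBasic := by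
  refine hu.1.comm hv hvu fun u₁ u₂ h => ?_
  have := hu.2.2 u₁ u₂ h
  rw [← rank_lt_rank_iff]
  omega

theorem comm_mem_eliminationSet_succ_rank (hu : u ∈ eliminationSet (z.rank + 1))
    (hz : z.IsBasic) : comm u z ∈ eliminationSet (z.rank + 1) := by
  refine ⟨isBasic_comm_of_mem_eliminationSet hu hz (rank_lt_rank_iff.1 hu.2.1) le_rfl, ?_, ?_⟩
  · refine hu.2.1.trans (rank_lt_rank (.inl ?_)).le
    simp only [wt]
    exact Nat.lt_add_of_pos_right z.wt_pos
  · rintro u₁ u₂ ⟨⟩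
    exact Nat.lt_succ_self _

theorem mem_eliminationSet_succ (hu : u ∈ eliminationSet t) (hut : u.rank ≠ t) :
    u ∈ eliminationSet (t + 1) :=
  ⟨hu.1, by have := hu.2.1; omega, fun u₁ u₂ h => (hu.2.2 u₁ u₂ h).trans (Nat.lt_succ_self t)⟩

theorem x_mem_eliminationSet_zero : .x ∈ eliminationSet 0 := ⟨.x, Nat.zero_le _, nofun⟩

theorem y_mem_eliminationSet_zero : .y ∈ eliminationSet 0 := ⟨.y, Nat.zero_le _, nofun⟩

end EliminationSet

/-- The pair of the total weight and the weight in `y`. -/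
def deg (u : CommWord) : ℕ × ℕ := (u.wt, u.wty)

theorem deg_comm (u v : CommWord) : (comm u v).deg = u.deg + v.deg := rfl

end CommWord

namespace CommFiltration

open CommWord

section Words

variable {H : Type*} [Group H] {a b : H} {n t : ℕ}

variable (a b) in
/-- The filtration generated by the values at `a` and `b` of the words in `S`, in which the value
of `u` has degree `u.deg`. -/
def generateWords (S : Set CommWord) : CommFiltration (ℕ × ℕ) H :=
  generate ((fun u => (u.deg, u.eval a b)) '' S)

theorem eval_mem_generateWords {S : Set CommWord} {u : CommWord} (hu : u ∈ S) :
    u.eval a b ∈ generateWords a b S u.deg :=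
  mem_generate (p := (u.deg, u.eval a b)) ⟨u, hu, rfl⟩

theorem cm_eval_mem_generateWords {S : Set CommWord} {u v : CommWord} (h : comm u v ∈ S) :
    cm (u.eval a b) (v.eval a b) ∈ generateWords a b S (u.deg + v.deg) := by
  rw [← deg_comm]
  exact eval_mem_generateWords h

theorem generateWords_eliminationSet_eq_bot_of_rank_eq {z : CommWord} (hz : z.IsBasic)
    (hzn : z.wt < n) (h : generateWords a b (eliminationSet (z.rank + 1)) (n, 2) = ⊥) :
    generateWords a b (eliminationSet z.rank) (n, 2) = ⊥ := by
  have hins := generate_insert_eq_bot (e := z.deg) (z := z.eval a b) ?_ ?_ h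
  · refine eq_bot_iff.2 (le_trans (generate_mono ?_ _) hins.le)
    rintro _ ⟨u, hu, rfl⟩
    obtain hut | hut := eq_or_ne u.rank z.rank
    · rw [rank_injective hut]
      exact Set.mem_insert _ _
    · exact Set.mem_insert_of_mem _ ⟨u, mem_eliminationSet_succ hu hut, rfl⟩
  · rintro _ ⟨u, hu, rfl⟩
    exact cm_eval_mem_generateWords (comm_mem_eliminationSet_succ_rank hu hz)
  · exact fun hle => hzn.not_ge hle.1

theorem generateWords_eliminationSet_eq_bot_of_succ (ht : t < {v : CommWord | v.wt < n}.ncard)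
    (h : generateWords a b (eliminationSet (t + 1)) (n, 2) = ⊥) :
    generateWords a b (eliminationSet t) (n, 2) = ⊥ := by
  by_cases hex : ∃ z : CommWord, z.IsBasic ∧ z.rank = t
  · obtain ⟨z, hz, rfl⟩ := hex
    rw [← not_le, ncard_wt_lt_le_rank_iff, not_le] at ht
    exact generateWords_eliminationSet_eq_bot_of_rank_eq hz ht h
  · refine eq_bot_iff.2 (le_trans (generate_mono (Set.image_mono fun u hu => ?_) _) h.le)
    exact mem_eliminationSet_succ hu fun hut => hex ⟨u, hu.1, hut⟩

theorem commute_eval_of_mem_eliminationSet (hn : 2 ≤ n)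
    (hb : ∀ c : CommWord, c.IsBasic → 2 ≤ c.wty → n ≤ c.wt → c.eval a b = 1) {u v : CommWord}
    (hu : u ∈ eliminationSet {v : CommWord | v.wt < n}.ncard)
    (hv : v ∈ eliminationSet {v : CommWord | v.wt < n}.ncard) :
    Commute (u.eval a b) (v.eval a b) := by
  wlog hvu : lt v u generalizing u v
  · obtain huv | rfl | hvu' := lt_or_eq_or_gt u v
    · exact (this hv hu huv).symm
    · exact .refl _
    · exact (hvu hvu').elim
  have hun := ncard_wt_lt_le_rank_iff.1 hu.2.1
  have hvn := ncard_wt_lt_le_rank_iff.1 hv.2.1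
  have hbasic : (comm u v).IsBasic :=
    isBasic_comm_of_mem_eliminationSet hu hv.1 hvu (Nat.le_succ_of_le hv.2.1)
  refine cm_eq_one_iff_commute.1 (hb _ hbasic ?_ (Nat.le_add_right_of_le hun))
  exact Nat.add_le_add (hu.1.wty_pos (hn.trans hun)) (hv.1.wty_pos (hn.trans hvn))

variable (a b) in
/-- The smallest filtration in which `a` has degree `(1, 0)` and `b` has degree `(1, 1)`: its term
of degree `(m, s)` contains the commutators of weight at least `m` in `a, b` and weight at least `s`
in `b`. -/
def weightFiltration : CommFiltration (ℕ × ℕ) H := generateWords a b {.x, .y}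

theorem weightFiltration_eq_bot (hn : 2 ≤ n)
    (hb : ∀ c : CommWord, c.IsBasic → 2 ≤ c.wty → n ≤ c.wt → c.eval a b = 1) :
    weightFiltration a b (n, 2) = ⊥ := by
  have helim : generateWords a b (eliminationSet 0) (n, 2) = ⊥ := by
    refine Nat.decreasingInduction (n := {v : CommWord | v.wt < n}.ncard)
      (motive := fun t _ => generateWords a b (eliminationSet t) (n, 2) = ⊥)
      (fun t ht ih => generateWords_eliminationSet_eq_bot_of_succ ht ih) ?_ (Nat.zero_le _)
    refine generate_eq_bot_of_commute ?_ ?_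
    · rintro _ ⟨u, hu, rfl⟩ _ ⟨v, hv, rfl⟩
      exact commute_eval_of_mem_eliminationSet hn hb hu hv
    · rintro _ ⟨u, hu, rfl⟩ hdeg
      exact hb u hu.1 hdeg.2 hdeg.1
  refine eq_bot_iff.2 (le_trans (generate_mono (Set.image_mono ?_) _) helim.le)
  rintro _ (rfl | rfl)
  exacts [x_mem_eliminationSet_zero, y_mem_eliminationSet_zero]

theorem eval_mem_weightFiltration (c : CommWord) : c.eval a b ∈ weightFiltration a b c.deg := by
  induction c with
  | x => exact eval_mem_generateWords (.inl rfl)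
  | y => exact eval_mem_generateWords (.inr rfl)
  | comm u v hu hv =>
    rw [deg_comm]
    exact cm_mem _ hu hv

theorem eval_mem_weightFiltration_of_le {c : CommWord} {m s : ℕ} (hm : m ≤ c.wt)
    (hs : s ≤ c.wty) : c.eval a b ∈ weightFiltration a b (m, s) :=
  mem_of_eq_add _ (eval_mem_weightFiltration c)
    (Prod.ext (Nat.add_sub_cancel' hm).symm (Nat.add_sub_cancel' hs).symm :
      c.deg = (m, s) + (c.wt - m, c.wty - s))

theorem weightFiltration_zero (hab : Subgroup.closure {a, b} = ⊤) :
    weightFiltration a b 0 = ⊤ := by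
  refine top_unique (hab ▸ (Subgroup.closure_le _).2 ?_)
  rintro _ (rfl | rfl)
  · exact eval_mem_weightFiltration_of_le (c := .x) (Nat.zero_le _) (Nat.zero_le _)
  · exact eval_mem_weightFiltration_of_le (c := .y) (Nat.zero_le _) (Nat.zero_le _)

theorem weightFiltration_le_comap_weightFiltration {H' : Type*} [Group H'] (φ : H →* H')
    (i : ℕ × ℕ) : weightFiltration a b i ≤ (weightFiltration (φ a) (φ b) i).comap φ := by
  refine generate_le (F := (weightFiltration (φ a) (φ b)).comap φ) ?_ i
  rintro _ ⟨u, -, rfl⟩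
  rw [mem_comap, map_eval]
  exact eval_mem_weightFiltration u

theorem weightFiltration_le_normalClosure (hn : 2 ≤ n) :
    weightFiltration a b (n, 2) ≤
      Subgroup.normalClosure (eval a b '' {c | c.IsBasic ∧ 2 ≤ c.wty ∧ n ≤ c.wt}) := by
  set N := Subgroup.normalClosure (eval a b '' {c | c.IsBasic ∧ 2 ≤ c.wty ∧ n ≤ c.wt})
  refine (weightFiltration_le_comap_weightFiltration (QuotientGroup.mk' N) _).trans ?_
  rw [weightFiltration_eq_bot hn, MonoidHom.comap_bot, QuotientGroup.ker_mk']
  intro c hc hy hcn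
  rw [← map_eval]
  exact (QuotientGroup.eq_one_iff _).2 (Subgroup.subset_normalClosure ⟨c, ⟨hc, hy, hcn⟩, rfl⟩)

end Words

section PrimePower

variable {H : Type*} [Group H] {a b : H} {N : Subgroup H} {p r : ℕ}

theorem pow_choose_mem {d : H} {s j : ℕ} (hp : p.Prime) (hj : 0 < j) (hjs : j ≤ p ^ s)
    (hd : ∀ v ≤ s, p ^ v ≤ j → d ^ p ^ (s - v) ∈ N) : d ^ (p ^ s).choose j ∈ N := by
  obtain ⟨v, hvs, hvj, t, ht⟩ := exists_pow_le_and_pow_sub_dvd_choose hp hj hjs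
  rw [ht, pow_mul]
  exact pow_mem (hd v hvs hvj) t

theorem pow_mem_of_mem_weightFiltration {d : H} {i s : ℕ} (hp : p.Prime)
    (hab : Subgroup.closure {a, b} = ⊤) (hN : N.Normal)
    (hbasic : ∀ c : CommWord, c.IsBasic → 2 ≤ c.wty → ∀ s ≤ r, p ^ r ≤ p ^ s * c.wt →
      c.eval a b ^ p ^ s ∈ N)
    (hi : 2 ≤ i) (hs : s ≤ r) (his : p ^ r ≤ p ^ s * i) (hd : d ∈ weightFiltration a b (i, 2)) :
    d ^ p ^ s ∈ N := by
  induction hq : p ^ r - i using Nat.strong_induction_on generalizing d i s with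
  | _ q ih =>
    have hd' := weightFiltration_le_normalClosure hi hd
    obtain hri | hri := le_or_gt (p ^ r) i
    · refine pow_mem (Subgroup.normalClosure_le_normal ?_ hd') _
      rintro _ ⟨c, ⟨hc, hy, hw⟩, rfl⟩
      simpa using hbasic c hc hy 0 (Nat.zero_le r) (by simpa using hri.trans hw)
    refine pow_mem_of_mem_normalClosure (weightFiltration_zero hab) hN (e := (i, 2)) ?_ ?_ ?_ hd'
    · rintro _ ⟨c, ⟨-, hy, hw⟩, rfl⟩
      exact eval_mem_weightFiltration_of_le hw hy
    · rintro _ ⟨c, ⟨hc, hy, hw⟩, rfl⟩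
      exact hbasic c hc hy s hs (his.trans (Nat.mul_le_mul_left _ hw))
    · intro j hj hjs c hc
      refine pow_choose_mem hp (by omega) hjs fun v hvs hvj => ?_
      have hij : i < j * i := lt_mul_of_one_lt_left (by omega) hj
      have hc' : c ∈ weightFiltration a b (j * i, 2) :=
        mem_of_eq_add (l := (0, j * 2 - 2)) _ hc (Prod.ext rfl (by simp; omega))
      refine ih _ (hq ▸ Nat.sub_lt_sub_left hri hij) (by omega) (by omega) ?_ hc' rfl
      calc p ^ r ≤ p ^ s * i := his
        _ = p ^ (s - v) * (p ^ v * i) := by rw [← mul_assoc, ← pow_add, Nat.sub_add_cancel hvs]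
        _ ≤ p ^ (s - v) * (j * i) := Nat.mul_le_mul_left _ (Nat.mul_le_mul_right _ hvj)

theorem collect_prime_pow_mem (hp : p.Prime) (hab : Subgroup.closure {a, b} = ⊤) (hN : N.Normal)
    (hbasic : ∀ c : CommWord, c.IsBasic → 2 ≤ c.wty → ∀ s ≤ r, p ^ r ≤ p ^ s * c.wt →
      c.eval a b ^ p ^ s ∈ N) :
    (collectedProd a b (p ^ r) (p ^ r))⁻¹ * ((a ^ p ^ r)⁻¹ * (a * b) ^ p ^ r) ∈ N := by
  have ha : a ∈ weightFiltration a b (1, 0) := eval_mem_weightFiltration .x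
  have hb : b ∈ weightFiltration a b ((0, 1) + (1, 0)) := eval_mem_weightFiltration .y
  refine apply_mem_of_pow_choose_mem (m := 2) (collect_mem_poly ha hb) ?_ fun j hj hjr d hd => ?_
  · intro n hn
    interval_cases n <;> simp [collectedProd, binomPow, itcomm]
  · refine pow_choose_mem hp (by omega) hjr fun v hv hvj => ?_
    refine pow_mem_of_mem_weightFiltration hp hab hN hbasic hj (Nat.sub_le r v) ?_
      (by simpa using hd)
    calc p ^ r = p ^ (r - v) * p ^ v := by rw [← pow_add, Nat.sub_add_cancel hv]
      _ ≤ p ^ (r - v) * j := Nat.mul_le_mul_left _ hvj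

end PrimePower

end CommFiltration

theorem closure_X_Y : Subgroup.closure {X x y, Y x y} = ⊤ := by
  refine Eq.trans (congrArg _ ?_) (Subgroup.closure_closure_coe_preimage (k := {x, y}))
  ext g
  change _ ↔ (g : G) ∈ ({x, y} : Set G)
  simp [X, Y, Subtype.ext_iff]

variable {p r x y} in
theorem eval_pow_mem_K (hp : p.Prime) {c : CommWord} (hc : c.IsBasic) (hy : 2 ≤ c.wty) {s : ℕ}
    (hs : s ≤ r) (hsc : p ^ r ≤ p ^ s * c.wt) : c.eval (X x y) (Y x y) ^ p ^ s ∈ K p r x y := by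
  obtain hw | hw := le_or_gt (p ^ r) c.wt
  · have hgen : c.eval (X x y) (Y x y) ∈ K p r x y :=
      Subgroup.subset_normalClosure ⟨c, hc, hy, .inl ⟨hw, rfl⟩⟩
    exact pow_mem hgen _
  set k := Nat.log p c.wt + 1
  have hck : c.wt < p ^ k := Nat.lt_pow_succ_log_self hp.one_lt _
  have hkr : k ≤ r := Nat.log_lt_of_lt_pow c.wt_pos.ne' hw
  have hrs : p ^ (r - s) ≤ c.wt := by
    rw [← Nat.sub_add_cancel hs, pow_add, mul_comm] at hsc
    exact Nat.le_of_mul_le_mul_left hsc (pow_pos hp.pos s)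
  have hsk : r - s < k := Nat.lt_succ_of_le (Nat.le_log_of_pow_le hp.one_lt hrs)
  have hgen : c.eval (X x y) (Y x y) ^ p ^ (r - k + 1) ∈ K p r x y :=
    Subgroup.subset_normalClosure ⟨c, hc, hy, .inr ⟨k, by omega, hkr, hck, rfl⟩⟩
  obtain ⟨t, rfl⟩ : ∃ t, s = r - k + 1 + t := Nat.exists_eq_add_of_le (by omega)
  rw [pow_add, pow_mul]
  exact pow_mem hgen _

/-- **Hall's collection formula.**  For a prime `p` and `r ≥ 1`,
`(xy)^(p^r) ≡ x^(p^r) y^(p^r) [y,x]^C(p^r,2) [y,x,x]^C(p^r,3) ⋯ [y,_(p^r - 1) x]  mod K(x,y)`. -/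
theorem hall_collection (hp : p.Prime) (hr : 1 ≤ r) :
    (X x y * Y x y) ^ p ^ r *
      (X x y ^ p ^ r * Y x y ^ p ^ r *
        ((List.range (p ^ r - 1)).map fun k =>
          itcomm (Y x y) (X x y) (k + 1) ^ (p ^ r).choose (k + 2)).prod)⁻¹ ∈
      K p r x y := by
  have hKn : (K p r x y).Normal := Subgroup.normalClosure_normal
  have hcollect := CommFiltration.collect_prime_pow_mem (r := r) hp (closure_X_Y x y) hKn
    fun c hc hy s hs hsc => eval_pow_mem_K hp hc hy hs hsc
  set a := X x y
  set b := Y x y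
  set V := CommFiltration.collectedProd a b (p ^ r) (p ^ r)
  have hprod : V = b ^ p ^ r * ((List.range (p ^ r - 1)).map fun k =>
      itcomm b a (k + 1) ^ (p ^ r).choose (k + 2)).prod := by
    rw [← CommFiltration.collectedProd_succ_apply, Nat.sub_add_cancel (Nat.pow_pos hp.pos)]
  rw [mul_assoc (a ^ p ^ r), ← hprod]
  convert hKn.conj_mem _ hcollect (a ^ p ^ r * V) using 1
  group

end Collection
end

section
/- Let G be a group. The map sending a generator a ⊗ b of the nonabelian tensor square G ⊗ G to the commutator [a, b^φ] in ν(G) extends to a group isomorphism from G ⊗ G onto the subgroup [G, G^φ] = ⟨[a, b^φ] : a, b ∈ G⟩ of ν(G). -/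
/-- Conjugation convention: `x ^ y = y⁻¹ * x * y`. -/
def cj {G : Type*} [Group G] (x y : G) : G := y⁻¹ * x * y

namespace Rocco

variable (G : Type*) [Group G]

/-- The defining relators of Rocco's group `ν(G)`, inside the free product `G ∗ G`
(the second factor playing the role of the isomorphic copy `G^φ`). -/
def rels : Set (Monoid.Coprod G G) :=
  {x | ∃ g₁ g₂ g₃ : G,
    x = cj (cm (Monoid.Coprod.inl g₁) (Monoid.Coprod.inr g₂)) (Monoid.Coprod.inl g₃) *
        (cm (Monoid.Coprod.inl (cj g₁ g₃)) (Monoid.Coprod.inr (cj g₂ g₃)))⁻¹ ∨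
    x = cj (cm (Monoid.Coprod.inl g₁) (Monoid.Coprod.inr g₂)) (Monoid.Coprod.inl g₃) *
        (cj (cm (Monoid.Coprod.inl g₁) (Monoid.Coprod.inr g₂)) (Monoid.Coprod.inr g₃))⁻¹}

/-- Rocco's construction `ν(G)`. -/
abbrev nu := Monoid.Coprod G G ⧸ Subgroup.normalClosure (rels G)

/-- The canonical image of `G` in `ν(G)`. -/
def ν₁ : G →* nu G := (QuotientGroup.mk' (Subgroup.normalClosure (rels G))).comp Monoid.Coprod.inl

/-- The canonical image of the copy `G^φ` in `ν(G)`; `ν₂ g` plays the role of `g^φ`. -/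
def ν₂ : G →* nu G := (QuotientGroup.mk' (Subgroup.normalClosure (rels G))).comp Monoid.Coprod.inr

end Rocco

/-- The defining relators of the nonabelian tensor square `G ⊗ G`, inside the free group on
the symbols `g ⊗ h` (pairs `(g, h)`): `(g₁g₂) ⊗ h = (g₁^{g₂} ⊗ h^{g₂})(g₂ ⊗ h)` and
`g ⊗ (h₁h₂) = (g ⊗ h₂)(g^{h₂} ⊗ h₁^{h₂})`. -/
def tensorRels (G : Type*) [Group G] : Set (FreeGroup (G × G)) :=
  {x | (∃ g₁ g₂ h : G,
        x = FreeGroup.of (g₁ * g₂, h) *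
            (FreeGroup.of (cj g₁ g₂, cj h g₂) * FreeGroup.of (g₂, h))⁻¹) ∨
      (∃ g h₁ h₂ : G,
        x = FreeGroup.of (g, h₁ * h₂) *
            (FreeGroup.of (g, h₂) * FreeGroup.of (cj g h₂, cj h₁ h₂))⁻¹)}

/-- The nonabelian tensor square `G ⊗ G`. -/
abbrev TensorSquare (G : Type*) [Group G] :=
  FreeGroup (G × G) ⧸ Subgroup.normalClosure (tensorRels G)

/-- The generator `g ⊗ h` of `G ⊗ G`. -/
def tmk {G : Type*} [Group G] (g h : G) : TensorSquare G :=
  QuotientGroup.mk (FreeGroup.of (g, h))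

/-!
Both defining relations of `G ⊗ G` hold for commutators `[a, b^φ]` in `ν(G)`, so the map to `ν(G)`
exists and its range is clear. For injectivity, represent `ν(G)` in a group where the commutators
`[a, b^φ]` are visibly a copy of `G ⊗ G`. Expanding `ag ⊗ bh` by the two relations in either order
shows that conjugation by `g ⊗ h` in `G ⊗ G` is the diagonal action of `[g, h]`. This is what makes
`t ↦ t^h`, `g ↦ g (g ⊗ h)` an automorphism of `(G ⊗ G) ⋊ G` for each `h ∈ G`; it is how a
second copy of `G` has to act if `[g, h^φ]` is to be `g ⊗ h`. In `((G ⊗ G) ⋊ G) ⋊ G` the two copies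
of `G` then satisfy the relations of `ν(G)`, and the composite of `G ⊗ G → ν(G)` with the induced
map is the inclusion of `G ⊗ G`.
-/

open scoped RightActions
open MulOpposite (op)

section Conjugation

variable {G H : Type*} [Group G] [Group H]

theorem cj_one (a : G) : cj a 1 = a := by simp [cj]

theorem mul_cj (a x y : G) : cj (x * y) a = cj x a * cj y a := by simp [cj, mul_assoc]

theorem cj_cj (a x y : G) : cj (cj a x) y = cj a (x * y) := by simp [cj, mul_assoc]

theorem mul_cj_self (x y : G) : x * cj y x = y * x := by simp [cj, mul_assoc]

theorem cm_eq_inv_mul_cj (x y : G) : cm x y = x⁻¹ * cj x y := by simp [cm, cj, mul_assoc]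

theorem mul_mul_cm (x y : G) : y * x * cm x y = x * y := by simp [cm, mul_assoc]

theorem mul_cm (x y z : G) : cm (x * y) z = cj (cm x z) y * cm y z := by
  simp [cm, cj, mul_assoc]

theorem cm_mul (x y z : G) : cm x (y * z) = cm x z * cj (cm x y) z := by
  simp [cm, cj, mul_assoc]

theorem map_cj (f : G →* H) (x y : G) : f (cj x y) = cj (f x) (f y) := by simp [cj]

theorem map_cm_s15 (f : G →* H) (x y : G) : f (cm x y) = cm (f x) (f y) := by simp [cm]

/-- Conjugation by `x` in the convention `a ↦ a ^ x`, as an endomorphism. -/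
def cjHom (x : G) : G →* G where
  toFun a := cj a x
  map_one' := by simp [cj]
  map_mul' := mul_cj x

theorem cjHom_apply (x a : G) : cjHom x a = cj a x := rfl

theorem cjHom_one : cjHom (1 : G) = .id G := MonoidHom.ext cj_one

theorem cjHom_comp_cjHom (x y : G) : (cjHom y).comp (cjHom x) = cjHom (x * y) :=
  MonoidHom.ext fun a ↦ cj_cj a x y

end Conjugation

section NormalClosureQuotient

variable {G H : Type*} [Group G] [Group H] {S : Set G}

theorem mk_eq_mk_of_mul_inv_mem {x y : G} (h : x * y⁻¹ ∈ S) :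
    (x : G ⧸ Subgroup.normalClosure S) = y :=
  mul_inv_eq_one.1 ((QuotientGroup.eq_one_iff _).2 (Subgroup.subset_normalClosure h))

/-- The homomorphism induced by `f` on the group obtained from `G` by imposing the relators `S`. -/
def normalClosureLift (f : G →* H) (hf : ∀ s ∈ S, f s = 1) : G ⧸ Subgroup.normalClosure S →* H :=
  QuotientGroup.lift _ f (Subgroup.normalClosure_le_normal (N := f.ker) hf)

theorem range_normalClosureLift (f : G →* H) (hf : ∀ s ∈ S, f s = 1) :
    (normalClosureLift f hf).range = f.range :=
  SetLike.coe_injective (QuotientGroup.mk_surjective.range_comp (normalClosureLift f hf)).symm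

end NormalClosureQuotient

/-- A *crossed pairing* (Brown–Loday) is a map `f : G × G → H` satisfying the defining relations
of `G ⊗ G`; homomorphisms `G ⊗ G → H` correspond to crossed pairings. -/
structure IsCrossedPairing {G H : Type*} [Group G] [Group H] (f : G → G → H) : Prop where
  map_mul_left (a b h : G) : f (a * b) h = f (cj a b) (cj h b) * f b h
  map_mul_right (g a b : G) : f g (a * b) = f g b * f (cj g b) (cj a b)

namespace IsCrossedPairing

variable {G H K : Type*} [Group G] [Group H] [Group K] {f : G → G → H}

theorem map_one_right (hf : IsCrossedPairing f) (g : G) : f g 1 = 1 := by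
  simpa [cj_one] using hf.map_mul_right g 1 1

theorem comp_monoidHom (hf : IsCrossedPairing f) (φ : K →* G) :
    IsCrossedPairing fun a b ↦ f (φ a) (φ b) where
  map_mul_left a b h := by simp only [map_mul, map_cj, hf.map_mul_left]
  map_mul_right g a b := by simp only [map_mul, map_cj, hf.map_mul_right]

theorem cj_mul_apply_mul_apply (hf : IsCrossedPairing f) (a b g h : G) :
    f (cj a (h * g)) (cj b (h * g)) * f g h = f g h * f (cj a (g * h)) (cj b (g * h)) := by
  have expand_left : f (a * g) (b * h) = f (cj a g) (cj h g) *
      (f (cj a (h * g)) (cj b (h * g)) * f g h) * f (cj g h) (cj b h) := by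
    rw [hf.map_mul_left, mul_cj, hf.map_mul_right, hf.map_mul_right g b h]
    simp only [cj_cj, mul_cj_self, mul_assoc]
  have expand_right : f (a * g) (b * h) = f (cj a g) (cj h g) *
      (f g h * f (cj a (g * h)) (cj b (g * h))) * f (cj g h) (cj b h) := by
    rw [hf.map_mul_right, hf.map_mul_left, mul_cj, hf.map_mul_left (cj a h)]
    simp only [cj_cj, mul_cj_self, mul_assoc]
  exact mul_left_cancel (mul_right_cancel (expand_left.symm.trans expand_right))

theorem cj_apply_apply (hf : IsCrossedPairing f) (a b g h : G) :
    cj (f a b) (f g h) = f (cj a (cm g h)) (cj b (cm g h)) := by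
  have key := hf.cj_mul_apply_mul_apply (cj a (h * g)⁻¹) (cj b (h * g)⁻¹) g h
  have hcm : (h * g)⁻¹ * (g * h) = cm g h := by simp [cm, mul_assoc]
  simp only [cj_cj, inv_mul_cancel, cj_one, hcm] at key
  rw [cj, mul_assoc, key, inv_mul_cancel_left]

end IsCrossedPairing

namespace TensorSquare

variable {G H K : Type*} [Group G] [Group H] [Group K]

theorem isCrossedPairing_tmk : IsCrossedPairing (tmk : G → G → TensorSquare G) where
  map_mul_left a b h := mk_eq_mk_of_mul_inv_mem (Or.inl ⟨a, b, h, rfl⟩)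
  map_mul_right g a b := mk_eq_mk_of_mul_inv_mem (Or.inr ⟨g, a, b, rfl⟩)

/-- The homomorphism `G ⊗ G → H` sending `a ⊗ b` to `f a b`, for a crossed pairing `f`. -/
def lift (f : G → G → H) (hf : IsCrossedPairing f) : TensorSquare G →* H :=
  normalClosureLift (FreeGroup.lift fun p : G × G ↦ f p.1 p.2) <| by
    rintro _ (⟨a, b, h, rfl⟩ | ⟨g, a, b, rfl⟩)
    · simp [hf.map_mul_left a b h]
    · simp [hf.map_mul_right g a b]

@[simp]
theorem lift_tmk (f : G → G → H) (hf : IsCrossedPairing f) (a b : G) :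
    lift f hf (tmk a b) = f a b :=
  FreeGroup.lift_apply_of

theorem hom_ext {f g : TensorSquare G →* H} (h : ∀ a b, f (tmk a b) = g (tmk a b)) : f = g :=
  QuotientGroup.monoidHom_ext _ (FreeGroup.ext_hom _ _ fun p ↦ h p.1 p.2)

theorem range_lift (f : G → G → H) (hf : IsCrossedPairing f) :
    (lift f hf).range = Subgroup.closure {x | ∃ a b, x = f a b} := by
  rw [lift, range_normalClosureLift, FreeGroup.range_lift_eq_closure]
  congr 1
  ext x
  simp [eq_comm]

/-- The homomorphism `G ⊗ G → H ⊗ H` induced by `φ : G → H`. -/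
def map (φ : G →* H) : TensorSquare G →* TensorSquare H :=
  lift (fun a b ↦ tmk (φ a) (φ b)) (isCrossedPairing_tmk.comp_monoidHom φ)

@[simp]
theorem map_tmk (φ : G →* H) (a b : G) : map φ (tmk a b) = tmk (φ a) (φ b) := lift_tmk ..

theorem map_id : map (.id G) = .id (TensorSquare G) := hom_ext fun a b ↦ by simp

theorem map_comp (ψ : H →* K) (φ : G →* H) : map (ψ.comp φ) = (map ψ).comp (map φ) :=
  hom_ext fun a b ↦ by simp

/-- The diagonal right action `(a ⊗ b) ^ x = a ^ x ⊗ b ^ x` of `G` on `G ⊗ G`, encoded as usual as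
an action of `Gᵐᵒᵖ`; it is written `t <• x`. -/
instance : MulDistribMulAction Gᵐᵒᵖ (TensorSquare G) where
  smul x := map (cjHom x.unop)
  one_smul t := DFunLike.congr_fun ((congrArg map cjHom_one).trans map_id) t
  mul_smul x y t := by
    have := congrArg map (cjHom_comp_cjHom y.unop x.unop)
    exact DFunLike.congr_fun (this.symm.trans (map_comp _ _)) t
  smul_mul x := map_mul (map (cjHom x.unop))
  smul_one x := map_one (map (cjHom x.unop))

theorem tmk_smul (x a b : G) : tmk a b <• x = tmk (cj a x) (cj b x) := map_tmk ..

theorem cj_tmk (t : TensorSquare G) (g h : G) : cj t (tmk g h) = t <• cm g h := by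
  have : cjHom (tmk g h) = MulDistribMulAction.toMonoidHom _ (op (cm g h)) := hom_ext fun a b ↦ by
    simp only [cjHom_apply, MulDistribMulAction.toMonoidHom_apply, tmk_smul,
      isCrossedPairing_tmk.cj_apply_apply]
  exact DFunLike.congr_fun this t

end TensorSquare

/-- The automorphisms of `M` given by a right action of `G`. The inverse turns the right action
into a left one, as `SemidirectProduct` requires. -/
def rightMulAut (M G : Type*) [Group M] [Group G] [MulDistribMulAction Gᵐᵒᵖ M] : G →* MulAut M :=
  (MulDistribMulAction.toMulAut Gᵐᵒᵖ M).comp (MulEquiv.inv' G).toMonoidHom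

/-- The semidirect product `M ⋊ G` of a right action of `G` on `M`, in which `m ^ x = m <• x`. -/
abbrev RightSemidirectProduct (M G : Type*) [Group M] [Group G] [MulDistribMulAction Gᵐᵒᵖ M] :=
  M ⋊[rightMulAut M G] G

theorem rightMulAut_apply {M G : Type*} [Group M] [Group G] [MulDistribMulAction Gᵐᵒᵖ M]
    (x : G) (m : M) : rightMulAut M G x m = m <• x⁻¹ := rfl

namespace RightSemidirectProduct

open SemidirectProduct (inl inr)

variable {M G H : Type*} [Group M] [Group G] [Group H] [MulDistribMulAction Gᵐᵒᵖ M]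

theorem cj_inl_inr (m : M) (x : G) :
    cj (inl m : RightSemidirectProduct M G) (inr x) = inl (m <• x) := by
  rw [cj, ← map_inv, ← SemidirectProduct.inl_aut_inv, ← map_inv, rightMulAut_apply, inv_inv]

/-- The homomorphism `M ⋊ G → H` extending `f₁` on `M` and `f₂` on `G`. -/
def lift (f₁ : M →* H) (f₂ : G →* H) (h : ∀ m x, f₁ (m <• x) = cj (f₁ m) (f₂ x)) :
    RightSemidirectProduct M G →* H :=
  SemidirectProduct.lift f₁ f₂ fun x ↦ MonoidHom.ext fun m ↦ by
    simp [rightMulAut_apply, h, cj, -MulOpposite.op_inv]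

@[simp]
theorem lift_inl (f₁ : M →* H) (f₂ : G →* H) (h : ∀ m x, f₁ (m <• x) = cj (f₁ m) (f₂ x))
    (m : M) : lift f₁ f₂ h (inl m) = f₁ m :=
  SemidirectProduct.lift_inl ..

@[simp]
theorem lift_inr (f₁ : M →* H) (f₂ : G →* H) (h : ∀ m x, f₁ (m <• x) = cj (f₁ m) (f₂ x))
    (x : G) : lift f₁ f₂ h (inr x) = f₂ x :=
  SemidirectProduct.lift_inr ..

/-- The splitting `x ↦ x (c x)` of `M ⋊ G → G` defined by a crossed homomorphism `c : G → M`. -/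
def ofCrossedHom (c : G → M) (hc : ∀ x y, c (x * y) = c x <• y * c y) :
    G →* RightSemidirectProduct M G :=
  MonoidHom.mk' (fun x ↦ inr x * inl (c x)) fun x y ↦ by
    rw [hc, map_mul, map_mul, ← cj_inl_inr, cj]
    group

theorem ofCrossedHom_apply (c : G → M) (hc : ∀ x y, c (x * y) = c x <• y * c y) (x : G) :
    ofCrossedHom c hc x = inr x * inl (c x) := rfl

end RightSemidirectProduct

namespace TensorSquare

open SemidirectProduct (inl inr)

variable {G : Type*} [Group G]

/-- The splitting `g ↦ g (g ⊗ h)` of `(G ⊗ G) ⋊ G → G`. -/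
def twistInr (h : G) : G →* RightSemidirectProduct (TensorSquare G) G :=
  RightSemidirectProduct.ofCrossedHom (tmk · h) fun a b ↦ by
    rw [isCrossedPairing_tmk.map_mul_left, tmk_smul]

theorem twistInr_apply (h g : G) : twistInr h g = inr g * inl (tmk g h) :=
  RightSemidirectProduct.ofCrossedHom_apply ..

theorem inl_smul_smul (t : TensorSquare G) (g h : G) :
    (inl (t <• g <• h) : RightSemidirectProduct (TensorSquare G) G) =
      cj (inl (t <• h)) (twistInr h g) := by
  rw [twistInr_apply, ← cj_cj, RightSemidirectProduct.cj_inl_inr, ← map_cj, cj_tmk]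
  simp only [op_smul_op_smul, mul_mul_cm]

/-- The endomorphism of `(G ⊗ G) ⋊ G` given by `t ↦ t ^ h` and `g ↦ g (g ⊗ h)`. -/
def twist (h : G) :
    RightSemidirectProduct (TensorSquare G) G →* RightSemidirectProduct (TensorSquare G) G :=
  RightSemidirectProduct.lift (inl.comp (MulDistribMulAction.toMonoidHom _ (op h))) (twistInr h)
    fun t g ↦ inl_smul_smul t g h

@[simp]
theorem twist_inl (h : G) (t : TensorSquare G) : twist h (inl t) = inl (t <• h) :=
  RightSemidirectProduct.lift_inl ..

@[simp]
theorem twist_inr (h g : G) : twist h (inr g) = inr g * inl (tmk g h) :=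
  (RightSemidirectProduct.lift_inr ..).trans (twistInr_apply h g)

theorem twist_one : twist (1 : G) = .id _ :=
  SemidirectProduct.hom_ext (MonoidHom.ext fun t ↦ by simp)
    (MonoidHom.ext fun g ↦ by simp [isCrossedPairing_tmk.map_one_right])

theorem twist_comp_twist (x y : G) : (twist y).comp (twist x) = twist (x * y) :=
  SemidirectProduct.hom_ext (MonoidHom.ext fun t ↦ by simp [mul_smul]) <|
    MonoidHom.ext fun g ↦ by
      simp [isCrossedPairing_tmk.map_mul_right, tmk_smul, mul_assoc]

/-- The right action of the second copy of `G` on `(G ⊗ G) ⋊ G`, by `twist`. -/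
instance : MulDistribMulAction Gᵐᵒᵖ (RightSemidirectProduct (TensorSquare G) G) where
  smul h := twist h.unop
  one_smul := DFunLike.congr_fun twist_one
  mul_smul x y p := (DFunLike.congr_fun (twist_comp_twist y.unop x.unop) p).symm
  smul_mul h := map_mul (twist h.unop)
  smul_one h := map_one (twist h.unop)

theorem inl_smul (t : TensorSquare G) (h : G) :
    (inl t : RightSemidirectProduct (TensorSquare G) G) <• h = inl (t <• h) :=
  twist_inl h t

theorem inr_smul (g h : G) :
    (inr g : RightSemidirectProduct (TensorSquare G) G) <• h = inr g * inl (tmk g h) :=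
  twist_inr h g

theorem cm_inl_inr_inr (g h : G) :
    cm (inl (inr g) : RightSemidirectProduct (RightSemidirectProduct (TensorSquare G) G) G)
      (inr h) = inl (inl (tmk g h)) := by
  rw [cm_eq_inv_mul_cj, RightSemidirectProduct.cj_inl_inr, inr_smul, ← map_inv, ← map_mul,
    inv_mul_cancel_left]

end TensorSquare

namespace Rocco

variable {G K : Type*} [Group G] [Group K]

/-- A pair of homomorphisms `φ, ψ : G → K` satisfies the defining relations of `ν(G)`, with `φ`
and `ψ` in place of the inclusions of `G` and `G^φ`; homomorphisms `ν(G) → K` correspond to such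
pairs. -/
structure IsNuPair (φ ψ : G →* K) : Prop where
  cj_left (a b c : G) : cj (cm (φ a) (ψ b)) (φ c) = cm (φ (cj a c)) (ψ (cj b c))
  cj_right (a b c : G) : cj (cm (φ a) (ψ b)) (ψ c) = cm (φ (cj a c)) (ψ (cj b c))

theorem isNuPair_ν₁_ν₂ : IsNuPair (ν₁ G) (ν₂ G) := by
  have cj_left (a b c : G) :
      cj (cm (ν₁ G a) (ν₂ G b)) (ν₁ G c) = cm (ν₁ G (cj a c)) (ν₂ G (cj b c)) :=
    mk_eq_mk_of_mul_inv_mem (S := rels G) ⟨a, b, c, Or.inl rfl⟩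
  have cj_left_eq_cj_right (a b c : G) :
      cj (cm (ν₁ G a) (ν₂ G b)) (ν₁ G c) = cj (cm (ν₁ G a) (ν₂ G b)) (ν₂ G c) :=
    mk_eq_mk_of_mul_inv_mem (S := rels G) ⟨a, b, c, Or.inr rfl⟩
  exact ⟨cj_left, fun a b c ↦ (cj_left_eq_cj_right a b c).symm.trans (cj_left a b c)⟩

namespace IsNuPair

variable {φ ψ : G →* K}

theorem isCrossedPairing_cm (h : IsNuPair φ ψ) : IsCrossedPairing fun a b ↦ cm (φ a) (ψ b) where
  map_mul_left a b c := by rw [map_mul, mul_cm, h.cj_left]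
  map_mul_right a b c := by rw [map_mul, cm_mul, h.cj_right]

/-- The homomorphism `ν(G) → K` restricting to `φ` on `G` and to `ψ` on `G^φ`. -/
def lift (h : IsNuPair φ ψ) : nu G →* K :=
  normalClosureLift (Monoid.Coprod.lift φ ψ) <| by
    rintro _ ⟨a, b, c, rfl | rfl⟩
    · simp [map_cj, map_cm_s15, h.cj_left]
    · simp [map_cj, map_cm_s15, h.cj_left, h.cj_right]

@[simp]
theorem lift_ν₁ (h : IsNuPair φ ψ) (g : G) : h.lift (ν₁ G g) = φ g :=
  Monoid.Coprod.lift_apply_inl φ ψ g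

@[simp]
theorem lift_ν₂ (h : IsNuPair φ ψ) (g : G) : h.lift (ν₂ G g) = ψ g :=
  Monoid.Coprod.lift_apply_inr φ ψ g

end IsNuPair

end Rocco

namespace TensorSquare

open Rocco
open SemidirectProduct (inl inr inl_injective)

variable (G : Type*) [Group G]

theorem isNuPair_inl_comp_inr_inr :
    IsNuPair (inl.comp inr : G →*
      RightSemidirectProduct (RightSemidirectProduct (TensorSquare G) G) G) inr where
  cj_left a b c := by
    simp only [MonoidHom.comp_apply, cm_inl_inr_inr, ← map_cj, RightSemidirectProduct.cj_inl_inr,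
      tmk_smul]
  cj_right a b c := by
    simp only [MonoidHom.comp_apply, cm_inl_inr_inr, RightSemidirectProduct.cj_inl_inr, inl_smul,
      tmk_smul]

/-- The homomorphism `G ⊗ G → ν(G)` sending `a ⊗ b` to `[a, b^φ]`. -/
def toNu : TensorSquare G →* nu G :=
  lift (fun a b ↦ cm (ν₁ G a) (ν₂ G b)) isNuPair_ν₁_ν₂.isCrossedPairing_cm

theorem toNu_tmk (a b : G) : toNu G (tmk a b) = cm (ν₁ G a) (ν₂ G b) := lift_tmk ..

theorem toNu_injective : Function.Injective (toNu G) := by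
  have comp_eq : (isNuPair_inl_comp_inr_inr G).lift.comp (toNu G) = inl.comp inl :=
    hom_ext fun a b ↦ by simp [toNu_tmk, map_cm_s15, cm_inl_inr_inr]
  refine Function.Injective.of_comp (f := (isNuPair_inl_comp_inr_inr G).lift) ?_
  rw [← MonoidHom.coe_comp, comp_eq]
  exact inl_injective.comp inl_injective

end TensorSquare

open Rocco in
/-- The map `a ⊗ b ↦ [a, b^φ]` extends to an isomorphism from `G ⊗ G` onto the subgroup
`[G, G^φ] = ⟨[a, b^φ] : a, b ∈ G⟩` of `ν(G)`. -/
theorem tensorSquare_iso_comm_subgroup (G : Type*) [Group G] :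
    ∃ f : TensorSquare G →* nu G,
      Function.Injective f ∧
      f.range = Subgroup.closure {x : nu G | ∃ a b : G, x = cm (ν₁ G a) (ν₂ G b)} ∧
      ∀ g h : G, f (tmk g h) = cm (ν₁ G g) (ν₂ G h) := by
  exact ⟨TensorSquare.toNu G, TensorSquare.toNu_injective G, TensorSquare.range_lift _ _,
    TensorSquare.toNu_tmk G⟩
end
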